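/- arXiv:1612.08439 — 4 statements merged into one kernel-verified Lean document; each statement's English description precedes it below -/
import Mathlib

section
/- Let f be an irrotational homeomorphism of the open annulus 𝔸 = 𝕋¹ × ℝ which preserves a Borel probability measure of full support, and let f̌ be the irrotational lift of f to ℝ². Then the set of bi-recurrent points of f̌ is dense in ℝ². In particular, f̌ is non-wandering: for every nonempty open set Ǔ ⊆ ℝ² there exist a point ž ∈ Ǔ and an integer n ≥ 1 with f̌ⁿ(ž) ∈ Ǔ. -/
open MeasureTheory Filter Topology Set

noncomputable section

/-- The circle `𝕋¹ = ℝ/ℤ`. -/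
abbrev T1 : Type := AddCircle (1 : ℝ)

/-- The open annulus `𝔸 = 𝕋¹ × ℝ`. -/
abbrev Ann : Type := T1 × ℝ

/-- The universal covering map `π : ℝ² → 𝔸`, `π(x,y) = (x + ℤ, y)`. -/
def pA : ℝ × ℝ → Ann := fun z => ((z.1 : T1), z.2)

/-- An open topological disk of `𝔸`: a nonempty open connected simply connected subset. -/
def IsOpenTopDisk (U : Set Ann) : Prop :=
  IsOpen U ∧ IsConnected U ∧ SimplyConnectedSpace U

/-- `f` is isotopic to the identity. -/
def IsotopicToId (f : Ann ≃ₜ Ann) : Prop :=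
  ∃ H : ℝ × Ann → Ann, ContinuousOn H (Set.Icc (0:ℝ) 1 ×ˢ Set.univ) ∧
    (∀ z, H (0, z) = z) ∧ (∀ z, H (1, z) = f z) ∧
    ∀ t ∈ Set.Icc (0:ℝ) 1, ∃ g : Ann ≃ₜ Ann, ∀ z, H (t, z) = g z

/-- `μ` is an `f`-invariant Borel probability measure of full support. -/
def InvariantFullMeasure (f : Ann ≃ₜ Ann) (μ : Measure Ann) : Prop :=
  IsProbabilityMeasure μ ∧ Measure.map f μ = μ ∧
    ∀ U : Set Ann, IsOpen U → U.Nonempty → 0 < μ U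

/-- `fc` is a lift of `f` to the universal covering `ℝ²`. -/
def IsLift (f : Ann ≃ₜ Ann) (fc : (ℝ × ℝ) ≃ₜ (ℝ × ℝ)) : Prop :=
  ∀ z, pA (fc z) = f (pA z)

/-- The rotation set of `fc` relative to a compact set `K`. -/
def rotK (fc : (ℝ × ℝ) ≃ₜ (ℝ × ℝ)) (K : Set Ann) : Set EReal :=
  {ρ | ∃ (z : ℕ → ℝ × ℝ) (n : ℕ → ℕ), Tendsto n atTop atTop ∧
    (∀ k, pA (z k) ∈ K ∧ pA ((⇑fc)^[n k] (z k)) ∈ K) ∧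
    Tendsto (fun k => (((((⇑fc)^[n k] (z k)).1 - (z k).1) / (n k) : ℝ) : EReal))
      atTop (nhds ρ)}

/-- The rotation set of `fc`. -/
def rot (fc : (ℝ × ℝ) ≃ₜ (ℝ × ℝ)) : Set EReal :=
  closure (⋃ (K : Set Ann) (_ : IsCompact K), rotK fc K)

/-- Alternative `(1)` in Theorems A and B: existence of non-contractible
periodic points of arbitrarily large prime period. -/
def NonContractibleAlt (fc : (ℝ × ℝ) ≃ₜ (ℝ × ℝ)) : Prop :=
  ∃ q : ℕ, 1 ≤ q ∧ ∀ r s : ℕ, 0 < r → 0 < s → Nat.Coprime r s → (r : ℝ) / s ≤ 1 / q →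
    (∃ z : ℝ × ℝ, (⇑fc)^[s] z + ((r : ℝ), 0) = z) ∨
    (∃ z : ℝ × ℝ, (⇑fc)^[s] z - ((r : ℝ), 0) = z)

/-- A point `ž` is bi-recurrent for `f̌` if `f̌^{n_k}(ž) → ž` and `f̌^{-m_k}(ž) → ž`
for some sequences `n_k → +∞`, `m_k → +∞`. -/
def IsBiRecurrentPt (fc : (ℝ × ℝ) ≃ₜ (ℝ × ℝ)) (z : ℝ × ℝ) : Prop :=
  (∃ n : ℕ → ℕ, Tendsto n atTop atTop ∧ Tendsto (fun k => (⇑fc)^[n k] z) atTop (𝓝 z)) ∧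
  (∃ m : ℕ → ℕ, Tendsto m atTop atTop ∧ Tendsto (fun k => (⇑fc.symm)^[m k] z) atTop (𝓝 z))

/-- Sections of the covering map. -/
def sigA (j : ℤ) (z : Ann) : ℝ × ℝ := (((AddCircle.equivIco (1:ℝ) 0 z.1 : ℝ)) + j, z.2)

lemma sigA_meas (j : ℤ) : Measurable (sigA j) := by
  unfold sigA
  have h : Measurable (fun a : T1 => ((AddCircle.equivIco (1:ℝ) 0 a : ℝ))) :=
    measurable_subtype_coe.comp (AddCircle.measurableEquivIco (1:ℝ) 0).measurable
  exact ((h.comp measurable_fst).add_const _).prodMk measurable_snd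

lemma pA_sigA (j : ℤ) (z : Ann) : pA (sigA j z) = z := by
  obtain ⟨a, y⟩ := z
  induction a using QuotientAddGroup.induction_on with
  | H x =>
    simp only [pA, sigA, Prod.mk.injEq, and_true]
    rw [AddCircle.coe_add, AddCircle.coe_equivIco]
    have : ((j:ℝ) : T1) = 0 := by
      rw [AddCircle.coe_eq_zero_iff]; exact ⟨j, by simp⟩
    rw [this, add_zero]

lemma sigA_pA (w : ℝ × ℝ) : sigA ⌊w.1⌋ (pA w) = w := by
  obtain ⟨x, y⟩ := w
  simp only [pA, sigA, Prod.mk.injEq, and_true]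
  rw [AddCircle.coe_equivIco_mk_apply]
  simp

lemma floor_sigA (j : ℤ) (z : Ann) : ⌊(sigA j z).1⌋ = j := by
  have h := (AddCircle.equivIco (1:ℝ) 0 z.1).2
  rw [Int.floor_eq_iff]
  simp only [sigA]
  constructor <;> linarith [h.1, h.2]

/-- The integers parametrize each fibre. -/
def fibA (z : Ann) : ℤ ≃ {w : ℝ × ℝ // pA w = z} where
  toFun j := ⟨sigA j z, pA_sigA j z⟩
  invFun w := ⌊w.1.1⌋
  left_inv j := floor_sigA j z
  right_inv w := by
    obtain ⟨w, rfl⟩ := w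
    exact Subtype.ext (sigA_pA w)

/-- The lifted measure. -/
def liftAnn (μ : Measure Ann) : Measure (ℝ × ℝ) := Measure.sum (fun j : ℤ => μ.map (sigA j))

lemma liftAnn_apply (μ : Measure Ann) {A : Set (ℝ × ℝ)} (hA : MeasurableSet A) :
    liftAnn μ A = ∑' j : ℤ, μ (sigA j ⁻¹' A) := by
  rw [liftAnn, Measure.sum_apply _ hA]
  exact tsum_congr fun j => Measure.map_apply (sigA_meas j) hA

lemma liftAnn_apply' (μ : Measure Ann) {A : Set (ℝ × ℝ)} (hA : MeasurableSet A) :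
    liftAnn μ A = ∫⁻ z, ∑' w : {w : ℝ × ℝ // pA w = z}, A.indicator 1 w.1 ∂μ := by
  rw [liftAnn_apply μ hA]
  have : ∀ z : Ann, (∑' w : {w : ℝ × ℝ // pA w = z}, A.indicator (1 : ℝ × ℝ → ENNReal) w.1)
      = ∑' j : ℤ, (sigA j ⁻¹' A).indicator 1 z := by
    intro z
    rw [← (fibA z).tsum_eq]
    rfl
  simp_rw [this]
  rw [lintegral_tsum]
  · exact tsum_congr fun j => (lintegral_indicator_one (sigA_meas j hA)).symm
  · intro j
    exact (measurable_one.indicator (sigA_meas j hA)).aemeasurable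

lemma liftAnn_mp {f : Ann ≃ₜ Ann} {μ : Measure Ann} (hμ : Measure.map f μ = μ)
    {fc : (ℝ × ℝ) ≃ₜ (ℝ × ℝ)} (hlift : IsLift f fc) :
    MeasurePreserving fc (liftAnn μ) (liftAnn μ) := by
  refine ⟨fc.continuous.measurable, ?_⟩
  ext A hA
  have hA' : MeasurableSet (fc ⁻¹' A) := fc.continuous.measurable hA
  rw [Measure.map_apply fc.continuous.measurable hA, liftAnn_apply' μ hA', liftAnn_apply' μ hA]
  have key : ∀ z : Ann, (∑' w : {w : ℝ × ℝ // pA w = z},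
      (fc ⁻¹' A).indicator (1 : ℝ × ℝ → ENNReal) w.1)
      = ∑' w : {w : ℝ × ℝ // pA w = f z}, A.indicator (1 : ℝ × ℝ → ENNReal) w.1 := by
    intro z
    rw [← (fc.toEquiv.subtypeEquiv (p := fun w => pA w = z) (q := fun w => pA w = f z)
      (fun w => by
        show _ ↔ pA (fc w) = _
        rw [hlift w, f.injective.eq_iff])).tsum_eq]
    rfl
  simp_rw [key]
  have h2 := lintegral_map_equiv (μ := μ)
    (fun z => ∑' w : {w : ℝ × ℝ // pA w = z}, A.indicator (1 : ℝ × ℝ → ENNReal) w.1)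
    f.toMeasurableEquiv
  rw [show μ.map f.toMeasurableEquiv = μ from hμ] at h2
  rw [h2]
  rfl

lemma liftAnn_le {μ : Measure Ann} {A : Set (ℝ × ℝ)} (hA : MeasurableSet A) {S : Set Ann}
    (hinj : InjOn pA A) (hS : ∀ w ∈ A, pA w ∈ S) : liftAnn μ A ≤ μ S := by
  rw [liftAnn_apply μ hA, ← measure_iUnion]
  · refine measure_mono (iUnion_subset fun j z hz => ?_)
    have := hS _ hz
    rwa [pA_sigA] at this
  · intro i j hij
    refine Set.disjoint_left.2 fun z hi hj => hij ?_
    have : sigA i z = sigA j z := hinj hi hj (by rw [pA_sigA, pA_sigA])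
    rw [← floor_sigA i z, this, floor_sigA]
  · exact fun j => sigA_meas j hA

lemma liftAnn_strip (μ : Measure Ann) [IsProbabilityMeasure μ] (R : ℕ) :
    liftAnn μ {w | -(R:ℝ) ≤ w.1 ∧ w.1 < R} ≤ 2 * R := by
  have hm : MeasurableSet {w : ℝ × ℝ | -(R:ℝ) ≤ w.1 ∧ w.1 < R} :=
    (measurableSet_le measurable_const measurable_fst).inter
      (measurableSet_lt measurable_fst measurable_const)
  rw [liftAnn_apply μ hm, tsum_eq_sum (s := Finset.Ico (-(R:ℤ)) R)]
  · refine (Finset.sum_le_card_nsmul _ _ 1 fun j _ => prob_le_one).trans ?_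
    simp only [Int.card_Ico, nsmul_eq_mul, mul_one]
    have : ((R:ℤ) - -(R:ℤ)).toNat = 2 * R := by omega
    rw [this]; push_cast; rfl
  · intro j hj
    convert measure_empty (μ := μ)
    ext z
    simp only [mem_preimage, mem_setOf_eq, mem_empty_iff_false, iff_false]
    rintro ⟨h1, h2⟩
    apply hj
    rw [Finset.mem_Ico, ← floor_sigA j z, Int.le_floor, Int.floor_lt]
    push_cast
    exact ⟨h1, h2⟩

lemma liftAnn_pos {μ : Measure Ann} (h : ∀ U : Set Ann, IsOpen U → U.Nonempty → 0 < μ U)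
    {U : Set (ℝ × ℝ)} (hU : IsOpen U) (hne : U.Nonempty) : liftAnn μ U ≠ 0 := by
  intro h0
  rw [liftAnn_apply μ hU.measurableSet, ENNReal.tsum_eq_zero] at h0
  have hop : IsOpenMap pA := (QuotientAddGroup.isOpenMap_coe).prodMap IsOpenMap.id
  have := h _ (hop U hU) (hne.image _)
  refine this.ne' (measure_mono_null (t := ⋃ j, sigA j ⁻¹' U) ?_ (measure_iUnion_null h0))
  rintro _ ⟨w, hw, rfl⟩
  refine mem_iUnion.2 ⟨⌊w.1⌋, ?_⟩
  rw [mem_preimage, sigA_pA]; exact hw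

lemma unif_bound {fc : (ℝ × ℝ) ≃ₜ (ℝ × ℝ)} (hirr : rot fc = {(0 : EReal)})
    {K : Set Ann} (hK : IsCompact K) {ε : ℝ} (hε : 0 < ε) :
    ∃ N : ℕ, ∀ n ≥ N, ∀ z, pA z ∈ K → pA ((⇑fc)^[n] z) ∈ K →
      |((⇑fc)^[n] z).1 - z.1| ≤ ε * n := by
  by_contra! H
  choose n hn z hz hz' hd using H
  have hnt : Tendsto n atTop atTop := tendsto_atTop_mono hn tendsto_id
  obtain ⟨ρ, φ, hφ, hlim⟩ := CompactSpace.tendsto_subseq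
    (fun k => ((((((⇑fc)^[n k] (z k)).1 - (z k).1) / (n k) : ℝ)) : EReal))
  have hρ : ρ ∈ rot fc := by
    apply subset_closure
    refine mem_iUnion₂.2 ⟨K, hK, z ∘ φ, n ∘ φ, hnt.comp hφ.tendsto_atTop, fun k => ⟨hz _, hz' _⟩, ?_⟩
    exact hlim
  rw [hirr, mem_singleton_iff] at hρ
  subst hρ
  have hlim' : Tendsto (fun k => (((⇑fc)^[n (φ k)] (z (φ k))).1 - (z (φ k)).1) / (n (φ k)))
      atTop (𝓝 (0:ℝ)) := by
    rw [← EReal.tendsto_coe]; exact hlim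
  have h1 := (hlim'.abs).eventually_lt_const (u := ε) (by simpa using hε)
  have h2 := (hnt.comp hφ.tendsto_atTop).eventually_ge_atTop 1
  obtain ⟨k, hk1, hk2⟩ := (h1.and h2).exists
  have hk3 : (0:ℝ) < n (φ k) := by
    have : 0 < n (φ k) := hk2
    exact_mod_cast this
  rw [abs_div, abs_of_pos hk3, div_lt_iff₀ hk3] at hk1
  exact absurd (hd (φ k)) (not_lt.2 hk1.le)

lemma lift_iter {f : Ann ≃ₜ Ann} {fc : (ℝ × ℝ) ≃ₜ (ℝ × ℝ)} (hlift : IsLift f fc) (n : ℕ)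
    (z : ℝ × ℝ) : pA ((⇑fc)^[n] z) = (⇑f)^[n] (pA z) :=
  (Function.Semiconj.iterate_right (f := pA) (ga := fc) (gb := f) hlift n) z

lemma no_wander {f : Ann ≃ₜ Ann} {μ : Measure Ann} [IsProbabilityMeasure μ]
    (hμ : Measure.map f μ = μ)
    {fc : (ℝ × ℝ) ≃ₜ (ℝ × ℝ)} (hlift : IsLift f fc) (hirr : rot fc = {(0 : EReal)})
    {W : Set (ℝ × ℝ)} (hW : MeasurableSet W) (j : ℤ) (M : ℕ)
    (hWb : ∀ w ∈ W, ⌊w.1⌋ = j ∧ |w.2| ≤ M) (h0 : liftAnn μ W ≠ 0) :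
    ∃ x ∈ W, ∃ m ≠ 0, (⇑fc)^[m] x ∈ W := by
  by_contra! H
  have hinj : InjOn pA W := by
    intro a ha b hb hab
    rw [← sigA_pA a, ← sigA_pA b, hab, (hWb a ha).1, (hWb b hb).1]
  have hW1 : liftAnn μ W ≤ 1 := (liftAnn_le hW hinj (S := univ) fun _ _ => trivial).trans prob_le_one
  have hWt : liftAnn μ W ≠ ⊤ := ne_top_of_le_ne_top ENNReal.one_ne_top hW1
  set δ := (liftAnn μ W).toReal with hδ
  have hδ0 : 0 < δ := ENNReal.toReal_pos h0 hWt
  -- choice of the compact set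
  obtain ⟨R, hRM, hR⟩ : ∃ R : ℕ, M ≤ R ∧ μ {z : Ann | (R:ℝ) < |z.2|} < ENNReal.ofReal (δ/2) := by
    have ht : Tendsto (fun R : ℕ => μ {z : Ann | (R:ℝ) < |z.2|}) atTop
        (𝓝 (μ (⋂ R : ℕ, {z : Ann | (R:ℝ) < |z.2|}))) := by
      apply tendsto_measure_iInter_atTop
      · intro R
        exact (measurableSet_lt measurable_const (by fun_prop)).nullMeasurableSet
      · intro a b hab z hz
        have : (a:ℝ) ≤ b := by exact_mod_cast hab
        exact lt_of_le_of_lt this hz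
      · exact ⟨0, measure_ne_top _ _⟩
    have he : (⋂ R : ℕ, {z : Ann | (R:ℝ) < |z.2|}) = ∅ := by
      ext z
      simp only [mem_iInter, mem_setOf_eq, mem_empty_iff_false, iff_false, not_forall, not_lt]
      exact exists_nat_ge _
    rw [he, measure_empty] at ht
    have h1 := ht.eventually_lt_const (u := ENNReal.ofReal (δ/2)) (by simpa using hδ0)
    obtain ⟨R, h1, h2⟩ := (h1.and (eventually_ge_atTop M)).exists
    exact ⟨R, h2, h1⟩
  set K : Set Ann := univ ×ˢ Icc (-(R:ℝ)) R with hK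
  have hKc : IsCompact K := isCompact_univ.prod isCompact_Icc
  have hKmem : ∀ z : Ann, z ∈ K ↔ |z.2| ≤ R := by
    intro z; simp [hK, abs_le]
  have hKcl : MeasurableSet (pA ⁻¹' K) := by
    have : pA ⁻¹' K = {w : ℝ × ℝ | |w.2| ≤ R} := by
      ext w; rw [mem_preimage, hKmem]; rfl
    rw [this]
    exact measurableSet_le (by fun_prop) measurable_const
  obtain ⟨N₀, hN₀⟩ := unif_bound hirr hKc (ε := δ/16) (by positivity)
  -- bound for small times
  obtain ⟨C, hC⟩ : ∃ C : ℝ, ∀ n < N₀, ∀ w ∈ W, |((⇑fc)^[n] w).1| ≤ C := by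
    have hB : IsCompact (⋃ n ∈ Finset.range N₀,
        (⇑fc)^[n] '' (Icc (j:ℝ) (j+1) ×ˢ Icc (-(M:ℝ)) M)) :=
      (Finset.range N₀).isCompact_biUnion fun n _ =>
        (isCompact_Icc.prod isCompact_Icc).image (fc.continuous.iterate n)
    obtain ⟨C, hC⟩ := hB.exists_bound_of_continuousOn (f := Prod.fst) continuous_fst.continuousOn
    refine ⟨C, fun n hn w hw => ?_⟩
    refine hC _ (mem_iUnion₂.2 ⟨n, Finset.mem_range.2 hn, w, ?_, rfl⟩)
    obtain ⟨h1, h2⟩ := hWb w hw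
    rw [Int.floor_eq_iff] at h1
    rw [abs_le] at h2
    exact ⟨⟨h1.1, h1.2.le⟩, h2⟩
  set D : ℝ := |C| + |(j:ℝ)| + 1 with hD
  have hmp : MeasurePreserving fc.symm (liftAnn μ) (liftAnn μ) :=
    MeasurePreserving.symm fc.toMeasurableEquiv (liftAnn_mp hμ hlift)
  have hleft : ∀ n : ℕ, ∀ x, (⇑fc)^[n] ((⇑fc.symm)^[n] x) = x := fun n =>
    Function.RightInverse.iterate (fun x => fc.apply_symm_apply x) n
  set A : ℕ → Set (ℝ × ℝ) := fun n => ((⇑fc.symm)^[n] ⁻¹' W) ∩ pA ⁻¹' K with hA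
  have hWn : ∀ n, MeasurableSet ((⇑fc.symm)^[n] ⁻¹' W) := fun n => (hmp.iterate n).measurable hW
  have hAm : ∀ n, MeasurableSet (A n) := fun n => (hWn n).inter hKcl
  have hAlow : ∀ n, ENNReal.ofReal (δ/2) ≤ liftAnn μ (A n) := by
    intro n
    have h1 : liftAnn μ ((⇑fc.symm)^[n] ⁻¹' W) = ENNReal.ofReal δ := by
      rw [(hmp.iterate n).measure_preimage hW.nullMeasurableSet, hδ, ENNReal.ofReal_toReal hWt]
    have h2 : liftAnn μ (((⇑fc.symm)^[n] ⁻¹' W) \ pA ⁻¹' K) ≤ ENNReal.ofReal (δ/2) := by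
      refine (liftAnn_le ((hWn n).diff hKcl) ?_ ?_).trans hR.le
      · intro a ha b hb hab
        have ha1 : (⇑fc.symm)^[n] a ∈ W := ha.1
        have hb1 : (⇑fc.symm)^[n] b ∈ W := hb.1
        rw [← hleft n a, ← hleft n b, lift_iter hlift, lift_iter hlift] at hab
        have := hinj ha1 hb1 (f.injective.iterate n hab)
        rw [← hleft n a, ← hleft n b, this]
      · intro w hw
        have := hw.2
        rw [mem_preimage, hKmem, not_le] at this
        exact this
    have h3 := measure_inter_add_diff (μ := liftAnn μ) ((⇑fc.symm)^[n] ⁻¹' W) hKcl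
    rw [h1] at h3
    have h4 : ENNReal.ofReal δ = ENNReal.ofReal (δ/2) + ENNReal.ofReal (δ/2) := by
      rw [← ENNReal.ofReal_add (by positivity) (by positivity)]; congr 1; ring
    by_contra! hlt
    have := ENNReal.add_lt_add_of_lt_of_le
      (ne_top_of_le_ne_top ENNReal.ofReal_ne_top h2) hlt h2
    rw [h3, h4] at this
    exact lt_irrefl _ this
  have hdisj' : ∀ n m, n < m → Disjoint (A n) (A m) := by
    intro n m hnm
    refine Set.disjoint_left.2 fun x hx hy => ?_
    have hx1 : (⇑fc.symm)^[n] x ∈ W := hx.1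
    have hy1 : (⇑fc.symm)^[m] x ∈ W := hy.1
    refine H _ hy1 (m - n) (by omega) ?_
    have : (⇑fc.symm)^[m] x = (⇑fc.symm)^[m-n] ((⇑fc.symm)^[n] x) := by
      rw [← Function.iterate_add_apply]; congr 2; omega
    rw [this, hleft]; exact hx1
  have hdisj : Pairwise (Function.onFun Disjoint A) := by
    intro n m hnm
    rcases lt_or_gt_of_ne hnm with h | h
    · exact hdisj' n m h
    · exact (hdisj' m n h).symm
  have hbd : ∀ N n : ℕ, n < N → ∀ x ∈ A n, |x.1| ≤ D + δ/16 * N := by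
    intro N n hn x hx
    have hx1 : (⇑fc.symm)^[n] x ∈ W := hx.1
    have hx2 : pA x ∈ K := hx.2
    set w := (⇑fc.symm)^[n] x with hw
    have hwx : (⇑fc)^[n] w = x := hleft n x
    have hnn : δ/16 * n ≤ δ/16 * N := by
      have : (n:ℝ) ≤ N := by exact_mod_cast hn.le
      gcongr
    have hn0 : 0 ≤ δ/16 * (n:ℝ) := by positivity
    by_cases hc : n < N₀
    · have := hC n hc w hx1
      rw [hwx] at this
      have h1 := le_abs_self C
      have h2 := abs_nonneg (j:ℝ)
      linarith
    · obtain ⟨h1, h2⟩ := hWb w hx1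
      have hwK : pA w ∈ K := by
        rw [hKmem]
        exact h2.trans (by exact_mod_cast hRM)
      have h3 := hN₀ n (not_lt.1 hc) w hwK (by rw [hwx]; exact hx2)
      rw [hwx] at h3
      rw [Int.floor_eq_iff] at h1
      have h4 : |w.1| ≤ |(j:ℝ)| + 1 := by
        rw [abs_le]
        constructor
        · linarith [neg_abs_le (j:ℝ), h1.1]
        · linarith [le_abs_self (j:ℝ), h1.2]
      have h5 : |x.1| ≤ |x.1 - w.1| + |w.1| := by
        have := abs_add_le (x.1 - w.1) w.1
        simpa using this
      linarith [abs_nonneg C]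
  have hmain : ∀ N : ℕ, N * (δ/2) ≤ 2 * (D + δ/16 * N + 2) := by
    intro N
    have hDpos : 0 ≤ D + δ/16 * N := by positivity
    set Q : ℕ := ⌊D + δ/16 * N⌋₊ + 1 with hQ
    have hQ1 : D + δ/16 * N < Q := by
      rw [hQ]; push_cast; exact Nat.lt_floor_add_one _
    have hQ2 : (Q:ℝ) ≤ D + δ/16 * N + 1 := by
      rw [hQ]; push_cast
      linarith [Nat.floor_le hDpos]
    have h1 : ∑ n ∈ Finset.range N, liftAnn μ (A n) ≤ 2 * Q := by
      rw [← measure_biUnion_finset (fun a _ b _ hab => hdisj hab) (fun n _ => hAm n)]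
      refine (measure_mono ?_).trans (liftAnn_strip μ Q)
      refine iUnion₂_subset fun n hn x hx => ?_
      have := abs_le.1 (hbd N n (Finset.mem_range.1 hn) x hx)
      exact ⟨by linarith [this.1], by linarith [this.2]⟩
    have h2 : (N:ENNReal) * ENNReal.ofReal (δ/2) ≤ 2 * Q := by
      refine le_trans ?_ h1
      have := Finset.card_nsmul_le_sum (Finset.range N) (fun n => liftAnn μ (A n)) _
        (fun n _ => hAlow n)
      simpa using this
    have h3 := ENNReal.toReal_mono (by finiteness) h2
    rw [ENNReal.toReal_mul, ENNReal.toReal_ofReal (by positivity)] at h3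
    simp at h3
    linarith
  obtain ⟨N, hN⟩ := exists_nat_gt ((2 * (D + 2)) / (δ/4))
  rw [div_lt_iff₀ (by positivity)] at hN
  have := hmain N
  have h6 : 0 ≤ δ * N := by positivity
  nlinarith

lemma conserv {f : Ann ≃ₜ Ann} {μ : Measure Ann} [IsProbabilityMeasure μ]
    (hμ : Measure.map f μ = μ)
    {fc : (ℝ × ℝ) ≃ₜ (ℝ × ℝ)} (hlift : IsLift f fc) (hirr : rot fc = {(0 : EReal)}) :
    Conservative fc (liftAnn μ) := by
  refine ⟨(liftAnn_mp hμ hlift).quasiMeasurePreserving, fun s hs h0 => ?_⟩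
  set W : ℤ × ℕ → Set (ℝ × ℝ) := fun q => s ∩ {w | ⌊w.1⌋ = q.1 ∧ |w.2| ≤ q.2} with hW
  have hWm : ∀ q, MeasurableSet (W q) := by
    intro q
    refine hs.inter (MeasurableSet.inter ?_ ?_)
    · exact (Int.measurable_floor.comp measurable_fst) (measurableSet_singleton q.1)
    · have h : MeasurableSet {w : ℝ × ℝ | |w.2| ≤ (q.2 : ℝ)} :=
        measurableSet_le (by fun_prop) measurable_const
      exact h
  obtain ⟨q, hq⟩ : ∃ q, liftAnn μ (W q) ≠ 0 := by
    by_contra! hc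
    refine h0 (measure_mono_null (t := ⋃ q, W q) ?_ (measure_iUnion_null hc))
    intro w hw
    obtain ⟨n, hn⟩ := exists_nat_ge |w.2|
    exact mem_iUnion.2 ⟨(⌊w.1⌋, n), hw, rfl, hn⟩
  obtain ⟨x, hx, m, hm, hxm⟩ := no_wander hμ hlift hirr (hWm q) q.1 q.2 (fun w hw => hw.2) hq
  exact ⟨x, hx.1, m, hm, hxm.1⟩

lemma seq_of_freq {g : ℝ × ℝ → ℝ × ℝ} {z : ℝ × ℝ}
    (h : ∀ s ∈ 𝓝 z, ∃ᶠ n in atTop, g^[n] z ∈ s) :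
    ∃ n : ℕ → ℕ, Tendsto n atTop atTop ∧ Tendsto (fun k => g^[n k] z) atTop (𝓝 z) := by
  obtain ⟨b, hb⟩ := (𝓝 z).exists_antitone_basis
  have : ∀ k : ℕ, ∃ n ≥ k, g^[n] z ∈ b k := fun k =>
    (frequently_atTop.1 (h _ (hb.mem k))) k
  choose n hn hn' using this
  exact ⟨n, tendsto_atTop_mono hn tendsto_id, hb.tendsto hn'⟩

/-- **Theorem C.** -/
theorem theorem_C (f : Ann ≃ₜ Ann) (μ : Measure Ann)
    (hiso : IsotopicToId f) (hμ : InvariantFullMeasure f μ)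
    (fc : (ℝ × ℝ) ≃ₜ (ℝ × ℝ)) (hlift : IsLift f fc)
    (hirr : rot fc = {(0 : EReal)}) :
    Dense {z : ℝ × ℝ | IsBiRecurrentPt fc z} ∧
      ∀ U : Set (ℝ × ℝ), IsOpen U → U.Nonempty →
        ∃ z ∈ U, ∃ n : ℕ, 1 ≤ n ∧ (⇑fc)^[n] z ∈ U := by
  obtain ⟨hp, hinv, hfull⟩ := hμ
  have hc := conserv hinv hlift hirr
  have hc' : Conservative fc.symm (liftAnn μ) := by
    refine ⟨(MeasurePreserving.symm fc.toMeasurableEquiv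
      (liftAnn_mp hinv hlift)).quasiMeasurePreserving, fun s hs h0 => ?_⟩
    obtain ⟨x, hx, m, hm, hxm⟩ := hc.exists_mem_iterate_mem' hs h0
    refine ⟨_, hxm, m, hm, ?_⟩
    rw [Function.LeftInverse.iterate (fun x => fc.symm_apply_apply x) m x]
    exact hx
  have hd : ∀ U : Set (ℝ × ℝ), IsOpen U → U.Nonempty → ∃ z ∈ U, IsBiRecurrentPt fc z ∧
      (∀ s ∈ 𝓝 z, ∃ᶠ n in atTop, (⇑fc)^[n] z ∈ s) := by
    intro U hU hne
    have h1 := hc.ae_frequently_mem_of_mem_nhds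
    have h2 := hc'.ae_frequently_mem_of_mem_nhds
    have h3 := (frequently_ae_mem_iff.2 (liftAnn_pos hfull hU hne)).and_eventually (h1.and h2)
    obtain ⟨z, hz, ha, hb⟩ := h3.exists
    exact ⟨z, hz, ⟨seq_of_freq ha, seq_of_freq hb⟩, ha⟩
  refine ⟨?_, fun U hU hne => ?_⟩
  · rw [dense_iff_inter_open]
    intro U hU hne
    obtain ⟨z, hz, hb, -⟩ := hd U hU hne
    exact ⟨z, hz, hb⟩
  · obtain ⟨z, hz, -, ha⟩ := hd U hU hne
    obtain ⟨n, hn, hn'⟩ := frequently_atTop.1 (ha U (hU.mem_nhds hz)) 1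
    exact ⟨z, hz, n, hn, hn'⟩
end
end

section
/- Let K ⊆ ℝ² be a path-connected set such that K ∩ (K + (1,0)) = ∅. Then for every integer j ≠ 0 one has K ∩ (K + (j,0)) = ∅. -/
open Set

lemma aux_log_path (L : ℝ → ℂ) (hL : Continuous L) (c : ℂ) (hc : c ≠ 0)
    (h : ∀ t, 0 ≤ (c * Complex.exp (L t)).re) :
    L 1 - L 0 = Complex.log (c * Complex.exp (L 1)) - Complex.log (c * Complex.exp (L 0)) := by
  have hne : ∀ t, c * Complex.exp (L t) ≠ 0 := fun t => mul_ne_zero hc (Complex.exp_ne_zero _)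
  have hs : ∀ t, c * Complex.exp (L t) ∈ Complex.slitPlane := by
    intro t
    rw [Complex.mem_slitPlane_iff]
    rcases (h t).lt_or_eq with h1 | h1
    · exact Or.inl h1
    · right
      intro h2
      exact hne t (Complex.ext h1.symm h2)
  have hcont : Continuous fun t => Complex.log (c * Complex.exp (L t)) := by
    apply Continuous.clog (by fun_prop) hs
  have key : (fun t => L t - Complex.log (c * Complex.exp (L t)))
      = fun _ => L 0 - Complex.log (c * Complex.exp (L 0)) := by
    apply Complex.isCoveringMap_exp.eq_of_comp_eq (hL.sub hcont) continuous_const _ 0 rfl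
    funext t
    apply Subtype.ext
    simp only [Function.comp, Pi.sub_apply]
    rw [Complex.exp_sub, Complex.exp_sub, Complex.exp_log (hne _), Complex.exp_log (hne _)]
    have := Complex.exp_ne_zero (L t)
    have := Complex.exp_ne_zero (L 0)
    field_simp
  have := congrFun key 1
  linear_combination this

lemma aux_arg_path (L : ℝ → ℂ) (hL : Continuous L) (c : ℂ) (hc : c ≠ 0)
    (D : ℝ → ℂ) (hD : ∀ t, Complex.exp (L t) = D t) (h : ∀ t, 0 ≤ (c * D t).re) :
    (L 1).im - (L 0).im = Complex.arg (c * D 1) - Complex.arg (c * D 0) := by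
  have := aux_log_path L hL c hc (by simpa [hD] using h)
  rw [hD, hD] at this
  simpa [Complex.log_im] using congrArg Complex.im this

lemma aux_cross (D : ℝ × ℝ → ℂ) (hD : Continuous D) (a b : ℝ) (ha : 0 < a) (hb : 0 < b)
    (h00 : D (0, 0) = a) (h11 : D (1, 1) = -(b : ℂ))
    (h0 : ∀ t, 0 ≤ (D (0, t)).im) (h1 : ∀ t, (D (1, t)).im ≤ 0)
    (h2 : ∀ s, (D (s, 0)).im ≤ 0) (h3 : ∀ s, 0 ≤ (D (s, 1)).im) : ∃ p, D p = 0 := by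
  by_contra! hne
  obtain ⟨L, ⟨-, hL⟩, -⟩ := Complex.isCoveringMapOn_exp.existsUnique_continuousMap_lifts
    (⟨D, hD⟩ : C(ℝ × ℝ, ℂ)) (a₀ := (0, 0)) (e₀ := Complex.log (D (0, 0)))
    (by simpa using Complex.exp_log (hne _)) (by simpa using hne)
  have hL' : ∀ p, Complex.exp (L p) = D p := fun p => congrFun hL p
  have hI : Complex.I ≠ 0 := Complex.I_ne_zero
  have e1 := aux_arg_path (fun t => L (0, t)) (by fun_prop) (-Complex.I) (by simp)
    (fun t => D (0, t)) (fun t => hL' _) (by simpa using h0)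
  have e2 := aux_arg_path (fun t => L (t, 1)) (by fun_prop) (-Complex.I) (by simp)
    (fun t => D (t, 1)) (fun t => hL' _) (by simpa using h3)
  have e3 := aux_arg_path (fun t => L (t, 0)) (by fun_prop) (Complex.I) (by simp)
    (fun t => D (t, 0)) (fun t => hL' _) (by simpa using h2)
  have e4 := aux_arg_path (fun t => L (1, t)) (by fun_prop) (Complex.I) (by simp)
    (fun t => D (1, t)) (fun t => hL' _) (by simpa using h1)
  rw [h00] at e1 e3
  rw [h11] at e2 e4
  have a1 : Complex.arg (-Complex.I * a) = -(Real.pi / 2) := by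
    rw [Complex.arg_mul_real ha, Complex.arg_neg_I]
  have a2 : Complex.arg (Complex.I * a) = Real.pi / 2 := by
    rw [Complex.arg_mul_real ha, Complex.arg_I]
  have a3 : Complex.arg (-Complex.I * -(b : ℂ)) = Real.pi / 2 := by
    rw [neg_mul_neg, Complex.arg_mul_real hb, Complex.arg_I]
  have a4 : Complex.arg (Complex.I * -(b : ℂ)) = -(Real.pi / 2) := by
    rw [mul_neg, ← neg_mul, Complex.arg_mul_real hb, Complex.arg_neg_I]
  rw [a1] at e1
  rw [a3] at e2
  rw [a2] at e3
  rw [a4] at e4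
  linarith [Real.pi_pos]

lemma aux_cross_paths {p q r s : ℝ × ℝ} (u : Path p q) (v : Path r s) (a b : ℝ)
    (ha : 0 < a) (hb : 0 < b) (h00 : p = r + (a, 0)) (h11 : s = q + (b, 0))
    (hu : ∀ t, q.2 ≤ (u t).2 ∧ (u t).2 ≤ p.2) (hv : ∀ t, q.2 ≤ (v t).2 ∧ (v t).2 ≤ p.2) :
    ∃ x y, u x = v y := by
  have hp : p.2 = r.2 := by rw [h00]; simp
  have hq : s.2 = q.2 := by rw [h11]; simp
  have hu' : ∀ t, q.2 ≤ (u.extend t).2 ∧ (u.extend t).2 ≤ p.2 := fun t => hu _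
  have hv' : ∀ t, q.2 ≤ (v.extend t).2 ∧ (v.extend t).2 ≤ p.2 := fun t => hv _
  obtain ⟨⟨x, y⟩, h⟩ := aux_cross
    (fun z => Complex.equivRealProdCLM.symm (u.extend z.1 - v.extend z.2))
    (by
      have := u.continuous_extend
      have := v.continuous_extend
      fun_prop) a b ha hb
    (by simp [Complex.ext_iff, h00])
    (by simp [Complex.ext_iff, h11])
    (by intro t; simpa using (hv' t).2)
    (by intro t; simpa using (hv' t).1)
    (by intro t; simpa [← hp] using (hu' t).2)
    (by intro t; simpa [hq] using (hu' t).1)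
  have h' : u.extend x - v.extend y = 0 := by
    exact (map_eq_zero_iff _ Complex.equivRealProdCLM.symm.injective).mp h
  exact ⟨_, _, sub_eq_zero.mp h'⟩

lemma aux_add (K : Set (ℝ × ℝ)) (hK : IsPathConnected K) (a b : ℝ) (ha : 0 < a) (hb : 0 < b)
    (hKa : ∀ z ∈ K, z + (a, 0) ∉ K) (hKb : ∀ z ∈ K, z + (b, 0) ∉ K) :
    ∀ z ∈ K, z + (a + b, 0) ∉ K := by
  intro z hz hz'
  obtain ⟨g, hg⟩ := hK.joinedIn z hz _ hz'
  obtain ⟨i, -, hi⟩ := isCompact_univ.exists_isMaxOn univ_nonempty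
    (f := fun t => (g t).2) (by fun_prop)
  obtain ⟨k, -, hk⟩ := isCompact_univ.exists_isMinOn univ_nonempty
    (f := fun t => (g t).2) (by fun_prop)
  have hi' : ∀ t, (g t).2 ≤ (g i).2 := fun t => hi (mem_univ t)
  have hk' : ∀ t, (g k).2 ≤ (g t).2 := fun t => hk (mem_univ t)
  have : PathConnectedSpace unitInterval := isPathConnected_iff_pathConnectedSpace.mp
    ((convex_Icc (0 : ℝ) 1).isPathConnected ⟨0, by simp⟩)
  have hR : IsPathConnected (range g) := isPathConnected_range g.continuous
  obtain ⟨w, hw⟩ := hR.joinedIn (g i) ⟨i, rfl⟩ (g k) ⟨k, rfl⟩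
  obtain ⟨v1, hv1⟩ := hR.joinedIn (g i) ⟨i, rfl⟩ (g 1) ⟨1, rfl⟩
  obtain ⟨v2, hv2⟩ := hR.joinedIn (g 0) ⟨0, rfl⟩ (g k) ⟨k, rfl⟩
  have hf : ∀ c : ℝ, Continuous fun z : ℝ × ℝ => z + (c, 0) := fun c => by fun_prop
  let V := (v1.cast rfl (by simp : g 0 + (a + b, 0) = g 1)).trans (v2.map (hf (a + b)))
  have hV : ∀ t, V t ∈ range g ∨ ∃ y ∈ range g, V t = y + (a + b, 0) := by
    intro t
    have : V t ∈ range V := ⟨t, rfl⟩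
    rw [Path.trans_range] at this
    rcases this with ⟨s, hs⟩ | ⟨s, hs⟩
    · left
      rw [← hs]
      exact hv1 s
    · right
      exact ⟨v2 s, hv2 s, hs.symm⟩
  obtain ⟨x, y, hxy⟩ := aux_cross_paths (w.map (hf a)) V a b ha hb rfl
    (by simp [add_assoc])
    (by
      intro t
      obtain ⟨s, hs⟩ := hw t
      simp [← hs, hi', hk'])
    (by
      intro t
      rcases hV t with ⟨s, hs⟩ | ⟨_, ⟨s, rfl⟩, hs⟩
      · simp [← hs, hi', hk']
      · simp [hs, hi', hk'])
  obtain ⟨s, hs⟩ := hw x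
  have hxy' : g s + (a, 0) = V y := by rw [← hxy, hs]; rfl
  rcases hV y with ⟨t, ht⟩ | ⟨_, ⟨t, rfl⟩, ht⟩
  · exact hKa _ (hg s) (by rw [hxy', ← ht]; exact hg t)
  · apply hKb _ (hg t)
    have : g t + (b, 0) = g s := by
      rw [ht] at hxy'
      simp only [Prod.ext_iff, Prod.fst_add, Prod.snd_add] at hxy' ⊢
      constructor <;> linarith [hxy'.1, hxy'.2]
    rw [this]
    exact hg s

/-- **Lemma 2.9** (after Brown): if a path-connected set `K ⊆ ℝ²` is disjoint from its
translate by `(1,0)`, then it is disjoint from all its nontrivial integer horizontal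
translates. -/
theorem pathConnected_disjoint_translates (K : Set (ℝ × ℝ))
    (hK : IsPathConnected K)
    (hdisj : K ∩ ((fun z : ℝ × ℝ => z + (1, 0)) '' K) = ∅) :
    ∀ j : ℤ, j ≠ 0 → K ∩ ((fun z : ℝ × ℝ => z + ((j : ℝ), 0)) '' K) = ∅ := by
  have h1 : ∀ z ∈ K, z + ((1 : ℝ), (0 : ℝ)) ∉ K := fun z hz hz' =>
    (eq_empty_iff_forall_notMem.mp hdisj _) ⟨hz', z, hz, rfl⟩
  have hn : ∀ n : ℕ, ∀ z ∈ K, z + (((n : ℝ) + 1), (0 : ℝ)) ∉ K := by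
    intro n
    induction n with
    | zero => simpa using h1
    | succ n ih =>
      have := aux_add K hK ((n : ℝ) + 1) 1 (by positivity) one_pos ih h1
      simpa using this
  intro j hj
  rw [eq_empty_iff_forall_notMem]
  rintro _ ⟨hz', z, hz, rfl⟩
  simp only at hz'
  rcases lt_or_gt_of_ne hj with h | h
  · obtain ⟨n, hn'⟩ := Int.eq_ofNat_of_zero_le (show 0 ≤ -j - 1 by lia)
    have hj' : (j : ℝ) = -((n : ℝ) + 1) := by
      have : j = -((n : ℤ) + 1) := by lia
      rw [this]; push_cast; ring
    apply hn n _ hz'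
    have : z + ((j : ℝ), (0 : ℝ)) + ((n : ℝ) + 1, (0 : ℝ)) = z := by
      rw [hj', Prod.ext_iff]; simp; ring
    rwa [this]
  · obtain ⟨n, hn'⟩ := Int.eq_ofNat_of_zero_le (show 0 ≤ j - 1 by lia)
    have hj' : (j : ℝ) = (n : ℝ) + 1 := by
      have : j = (n : ℤ) + 1 := by lia
      rw [this]; push_cast; ring
    apply hn n z hz
    rwa [← hj']
end

section
/- Let δ : [0,1] → ℝ² be an injective continuous path whose image is disjoint from its translate by (1,0), i.e. δ([0,1]) ∩ (δ([0,1]) + (1,0)) = ∅. Let γ : [0,1] → ℝ² be a continuous path with γ(0) ∈ δ([0,1]) and γ(1) ∈ δ([0,1]) + (j,0) for some natural number j. Then at least one of the following holds: (i) γ meets its translate γ + (1,0), i.e. there exist s, t ∈ [0,1] with γ(s) = γ(t) + (1,0); or (ii) for every i ∈ {0, 1, …, j}, the image of γ meets δ([0,1]) + (i,0). -/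
open Set

lemma aux_const {f : ℝ → ℂ} (hf : Continuous f) {c : ℂ} (h : ∀ x, Complex.exp (f x) = c)
    (a b : ℝ) : f a = f b := by
  refine Complex.isCoveringMap_exp.const_of_comp hf ?_ a b
  intro x y
  simp [h]

lemma aux_lift {g : ℝ × ℝ → ℂ} (hg : Continuous g) (h0 : ∀ x, g x ≠ 0) :
    ∃ L : ℝ × ℝ → ℂ, Continuous L ∧ ∀ x, Complex.exp (L x) = g x := by
  obtain ⟨F, ⟨-, hF⟩, -⟩ := Complex.isCoveringMapOn_exp.existsUnique_continuousMap_lifts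
    (A := ℝ × ℝ) ⟨g, hg⟩ (a₀ := (0, 0)) (e₀ := Complex.log (g (0, 0)))
    (Complex.exp_log (h0 _)) (fun x => h0 x)
  exact ⟨F, F.continuous, fun x => congrFun hF x⟩

/-- change of logarithm along a path for which `c * g` stays in the right half plane -/
lemma aux_half {L : ℝ → ℂ} (hL : Continuous L) {c : ℂ} (hc : c ≠ 0)
    (h : ∀ x, 0 ≤ (c * Complex.exp (L x)).re) (a b : ℝ) :
    L b - L a = Complex.log (c * Complex.exp (L b)) - Complex.log (c * Complex.exp (L a)) := by
  have hne : ∀ x, c * Complex.exp (L x) ≠ 0 := fun x => mul_ne_zero hc (Complex.exp_ne_zero _)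
  have hs : ∀ x, c * Complex.exp (L x) ∈ Complex.slitPlane := by
    intro x
    rw [Complex.mem_slitPlane_iff]
    rcases (h x).lt_or_eq with h1 | h1
    · exact Or.inl h1
    · right
      intro h2
      exact hne x (Complex.ext h1.symm h2)
  have hcont : Continuous (fun x => L x - Complex.log (c * Complex.exp (L x))) := by
    refine hL.sub (Continuous.clog (by fun_prop) hs)
  have := aux_const hcont (c := c⁻¹) (fun x => by
    rw [Complex.exp_sub, Complex.exp_log (hne x)]
    have := Complex.exp_ne_zero (L x)
    field_simp) a b
  linear_combination -this

lemma core {α : ℝ → ℂ} (hα : Continuous α) {n : ℤ} (hn : 2 ≤ n)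
    (hp : ∀ t, α (t + 1) = α t + n) : ∃ s t, α s = α t + 1 := by
  by_contra! hcon
  have hper : Function.Periodic (fun t => (α t).im) 1 := by
    intro t; simp [hp]
  obtain ⟨t0, -, ht0⟩ := isCompact_Icc.exists_isMaxOn (nonempty_Icc.2 (zero_le_one (α := ℝ)))
    (f := fun t => (α t).im) (by fun_prop)
  have hmax : ∀ t, (α t).im ≤ (α t0).im := by
    intro t
    obtain ⟨y, hy, hy'⟩ := hper.exists_mem_Ico₀ one_pos t
    have h1 := ht0 (Ico_subset_Icc_self hy)
    simp only [mem_ofPred_eq] at h1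
    exact hy'.le.trans h1
  obtain ⟨L, hLc, hL⟩ := aux_lift (g := fun x => α x.1 - α x.2 - 1) (by fun_prop)
    (fun x hx => hcon x.1 x.2 (by linear_combination hx))
  have hdiag := aux_const (f := fun x => L (x, x)) (by fun_prop) (c := -1)
    (fun x => by rw [hL]; ring) t0 (t0 + 1)
  have h1 := aux_half (L := fun s => L (s, t0)) (by fun_prop) Complex.I_ne_zero (fun x => by
    rw [hL]; simp; linarith [hmax x]) t0 (t0 + 1)
  have h2 := aux_half (L := fun t => L (t0 + 1, t)) (by fun_prop) (neg_ne_zero.2 Complex.I_ne_zero)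
    (fun x => by
    rw [hL]; simp [hp]; linarith [hmax x]) (t0 + 1) t0
  simp only [hL, hp] at h1 h2
  have hn' : (0 : ℝ) < (n : ℝ) - 1 := by
    have : (2 : ℝ) ≤ n := by exact_mod_cast hn
    linarith
  have e1 : Complex.I * (α t0 + n - α t0 - 1) = ((n - 1 : ℝ) : ℂ) * Complex.I := by
    push_cast; ring
  have e2 : Complex.I * (α t0 - α t0 - 1) = -Complex.I := by ring
  have e3 : -Complex.I * (α t0 + n - α t0 - 1) = ((n - 1 : ℝ) : ℂ) * -Complex.I := by
    push_cast; ring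
  have e4 : -Complex.I * (α t0 + n - (α t0 + n) - 1) = Complex.I := by ring
  rw [e1, e2, Complex.log_ofReal_mul hn' Complex.I_ne_zero] at h1
  rw [e3, e4, Complex.log_ofReal_mul hn' (neg_ne_zero.2 Complex.I_ne_zero)] at h2
  rw [Complex.log_neg_I, Complex.log_I] at h1 h2
  have h3 : (2 * Real.pi : ℂ) * Complex.I = 0 := by
    linear_combination h2 - h1 - hdiag
  have := Real.pi_ne_zero
  simp [this] at h3

lemma core' {γ : ℝ → ℂ} (hγ : Continuous γ) {n : ℤ} (hn : 2 ≤ n) (h01 : γ 1 = γ 0 + n) :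
    ∃ s ∈ Ico (0 : ℝ) 1, ∃ t ∈ Ico (0 : ℝ) 1, ∃ m : ℤ, γ s = γ t + (1 + n * m : ℤ) := by
  have hβ : Continuous ((fun u : ℝ => γ u - n * u) ∘ Int.fract) := by
    apply ContinuousOn.comp_fract''
    · apply Continuous.continuousOn; fun_prop
    · simp [h01]
  obtain ⟨s, t, hst⟩ := core (α := fun t => n * t + ((fun u : ℝ => γ u - n * u) ∘ Int.fract) t)
    (by fun_prop) hn (fun t => by simp; ring)
  refine ⟨Int.fract s, ⟨Int.fract_nonneg _, Int.fract_lt_one _⟩, Int.fract t,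
    ⟨Int.fract_nonneg _, Int.fract_lt_one _⟩, ⌊t⌋ - ⌊s⌋, ?_⟩
  have hs : ((Int.fract s : ℝ) : ℂ) = s - ⌊s⌋ := by rw [Int.fract]; push_cast; rfl
  have ht : ((Int.fract t : ℝ) : ℂ) = t - ⌊t⌋ := by rw [Int.fract]; push_cast; rfl
  simp only [Function.comp, hs, ht] at hst
  push_cast
  linear_combination hst

lemma closed_int (S : Set ℤ) : IsClosed ((fun k : ℤ => (k : ℂ)) '' S) := by
  have h : Topology.IsClosedEmbedding (fun k : ℤ => (k : ℂ)) := by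
    exact Complex.isometry_ofReal.isClosedEmbedding.comp Int.isClosedEmbedding_coe_real
  exact h.isClosedMap _ (isClosed_discrete S)

lemma self {γ : ℝ → ℂ} (hγ : Continuous γ)
    (h : ∀ s ∈ Icc (0 : ℝ) 1, ∀ t ∈ Icc (0 : ℝ) 1, γ s ≠ γ t + 1) :
    ∀ s ∈ Icc (0 : ℝ) 1, ∀ t ∈ Icc (0 : ℝ) 1, ∀ k : ℤ, γ s = γ t + k → k = 0 := by
  have key : ∀ s ∈ Icc (0 : ℝ) 1, ∀ t ∈ Icc (0 : ℝ) 1, ∀ k : ℤ, 0 < k → γ t ≠ γ s + k := by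
    intro s0 hs0 t0 ht0 k0 hk0 hst0
    let K : Set (ℝ × ℝ) := (Icc 0 1 ×ˢ Icc 0 1) ∩
      (fun p => γ p.2 - γ p.1) ⁻¹' ((fun k : ℤ => (k : ℂ)) '' Ioi 0)
    have hK : IsCompact K := (isCompact_Icc.prod isCompact_Icc).inter_right
      ((closed_int _).preimage (by fun_prop))
    have hKn : K.Nonempty := ⟨(s0, t0), ⟨hs0, ht0⟩, k0, hk0, by simp [hst0]⟩
    obtain ⟨⟨s, t⟩, ⟨⟨hs, ht⟩, n, hn, hnst⟩, hmin⟩ := hK.exists_isMinOn hKn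
      (f := fun p => |p.2 - p.1|) (by fun_prop)
    simp only [mem_Ioi] at hs ht hn hnst
    have hn1 : n ≠ 1 := by
      rintro rfl
      exact h t ht s hs (by push_cast at hnst; linear_combination -hnst)
    have hconv : ∀ x ∈ Ico (0 : ℝ) 1, s + (t - s) * x ∈ Icc (0 : ℝ) 1 := by
      rintro x ⟨hx0, hx1⟩
      constructor <;> nlinarith [hs.1, hs.2, ht.1, ht.2]
    have hne : t - s ≠ 0 := by
      intro h0
      have : t = s := by linarith
      rw [this, sub_self] at hnst
      have : n = 0 := by exact_mod_cast hnst
      omega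
    obtain ⟨x, hx, y, hy, m, hxy⟩ := core' (γ := fun x => γ (s + (t - s) * x)) (by fun_prop)
      (n := n) (by omega) (by
        simp only [mul_one, mul_zero, add_zero, add_sub_cancel]
        linear_combination -hnst)
    have hm : (1 + n * m : ℤ) ≠ 0 := by
      intro h0
      have : n ∣ 1 := ⟨-m, by linarith⟩
      have := Int.le_of_dvd one_pos this
      omega
    have hlt : |(t - s) * (x - y)| < |t - s| := by
      rw [abs_mul]
      have : |x - y| < 1 := by rw [abs_lt]; constructor <;> linarith [hx.1, hx.2, hy.1, hy.2]
      have := abs_pos.2 hne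
      nlinarith
    have fin : ∀ p q, p ∈ Ico (0 : ℝ) 1 → q ∈ Ico (0 : ℝ) 1 → |(t - s) * (q - p)| < |t - s| →
        ∀ k : ℤ, 0 < k → γ (s + (t - s) * q) ≠ γ (s + (t - s) * p) + k := by
      intro p q hp hq hlt k hk he
      have := hmin (a := (s + (t - s) * p, s + (t - s) * q))
        ⟨⟨hconv p hp, hconv q hq⟩, k, hk, by simp [he]⟩
      simp only [mem_ofPred_eq] at this
      rw [show s + (t - s) * q - (s + (t - s) * p) = (t - s) * (q - p) by ring] at this
      linarith
    rcases hm.lt_or_gt with hm | hm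
    · refine fin x y hx hy ?_ (-(1 + n * m)) (by omega) ?_
      · rw [← abs_neg, show -((t - s) * (y - x)) = (t - s) * (x - y) by ring]; exact hlt
      · push_cast at hxy ⊢
        linear_combination -hxy
    · exact fin y x hy hx hlt _ hm hxy
  intro s hs t ht k hk
  rcases lt_trichotomy k 0 with h0 | h0 | h0
  · exact absurd (show γ t = γ s + (-k : ℤ) by push_cast; linear_combination -hk)
      (key s hs t ht (-k) (by omega))
  · exact h0
  · exact absurd hk (key t ht s hs k h0)

open scoped Pointwise in
lemma mainC {γ δ : ℝ → ℂ} (hγ : Continuous γ) (hδ : Continuous δ)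
    (hg : ∀ s ∈ Icc (0 : ℝ) 1, ∀ t ∈ Icc (0 : ℝ) 1, γ s ≠ γ t + 1)
    (hd : ∀ s ∈ Icc (0 : ℝ) 1, ∀ t ∈ Icc (0 : ℝ) 1, δ s ≠ δ t + 1)
    (i j : ℤ) (hi : 0 < i) (hij : i < j)
    (h0 : ∃ t ∈ Icc (0 : ℝ) 1, γ 0 = δ t) (h1 : ∃ t ∈ Icc (0 : ℝ) 1, γ 1 = δ t + j) :
    ∃ s ∈ Icc (0 : ℝ) 1, ∃ t ∈ Icc (0 : ℝ) 1, γ s = δ t + i := by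
  by_contra! hmiss
  have sg := self hγ hg
  have sd := self hδ hd
  let C : Set ℤ → Set ℝ := fun S => {s | s ∈ Icc (0 : ℝ) 1 ∧ ∃ t ∈ Icc (0 : ℝ) 1, ∃ k ∈ S,
    γ s = δ t + (k : ℤ)}
  have hC : ∀ S, IsCompact (C S) := by
    intro S
    have : C S = Icc (0 : ℝ) 1 ∩ γ ⁻¹' (δ '' Icc 0 1 + (fun k : ℤ => (k : ℂ)) '' S) := by
      ext s
      simp only [C, mem_ofPred_eq, mem_inter_iff, mem_preimage, Set.mem_add, mem_image]
      constructor
      · rintro ⟨hs, t, ht, k, hk, he⟩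
        exact ⟨hs, _, ⟨t, ht, rfl⟩, _, ⟨k, hk, rfl⟩, he.symm⟩
      · rintro ⟨hs, _, ⟨t, ht, rfl⟩, _, ⟨k, hk, rfl⟩, he⟩
        exact ⟨hs, t, ht, k, hk, he.symm⟩
    rw [this]
    exact isCompact_Icc.inter_right
      (((closed_int S).add_left_of_isCompact (isCompact_Icc.image hδ)).preimage hγ)
  obtain ⟨r0, hr0, e0⟩ := h0
  obtain ⟨r1, hr1, e1⟩ := h1
  have hne : (C (Iio i) ×ˢ C (Ioi i)).Nonempty :=
    ⟨(0, 1), ⟨by simp, r0, hr0, 0, hi, by simp [e0]⟩, ⟨by simp, r1, hr1, j, hij, e1⟩⟩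
  obtain ⟨⟨s, t⟩, ⟨hsC, htC⟩, hmin⟩ := ((hC (Iio i)).prod (hC (Ioi i))).exists_isMinOn hne
    (f := fun p => |p.2 - p.1|) (by fun_prop)
  have hsC' := hsC
  have htC' := htC
  obtain ⟨hs, p, hp, a, ha, ea⟩ := hsC
  obtain ⟨ht, q, hq, b, hb, eb⟩ := htC
  simp only [mem_Iio, mem_Ioi] at ha hb ea eb hs ht hsC' htC'
  have hconv : ∀ x ∈ Icc (0 : ℝ) 1, s + (t - s) * x ∈ Icc (0 : ℝ) 1 := by
    rintro x ⟨hx0, hx1⟩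
    constructor <;> nlinarith [hs.1, hs.2, ht.1, ht.2]
  have hconv' : ∀ x ∈ Icc (0 : ℝ) 1, q + (p - q) * x ∈ Icc (0 : ℝ) 1 := by
    rintro x ⟨hx0, hx1⟩
    constructor <;> nlinarith [hp.1, hp.2, hq.1, hq.2]
  -- the only hits of the half-open piece
  have hit : ∀ x, 0 ≤ x → x < 1 → ∀ r ∈ Icc (0 : ℝ) 1, ∀ l : ℤ,
      γ (s + (t - s) * x) = δ r + l → l = a := by
    intro x hx0 hx1 r hr l he
    have hxI := hconv x ⟨hx0, hx1.le⟩
    have hst : 0 < |t - s| := by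
      rw [abs_pos]
      intro h
      have h : t = s := by linarith
      rw [h, ea] at eb
      have := sd p hp q hq (b - a) (by push_cast; linear_combination eb)
      omega
    rcases lt_trichotomy l i with hl | hl | hl
    · have := hmin (a := (s + (t - s) * x, t)) ⟨⟨hxI, r, hr, l, hl, he⟩, htC'⟩
      simp only [mem_ofPred_eq] at this
      rw [show t - (s + (t - s) * x) = (t - s) * (1 - x) by ring, abs_mul,
        abs_of_pos (by linarith : 0 < 1 - x)] at this
      have hx : x = 0 := by nlinarith
      rw [hx, mul_zero, add_zero, ea] at he
      have := sd p hp r hr (l - a) (by push_cast; linear_combination he)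
      omega
    · rw [hl] at he
      exact absurd he (hmiss _ hxI r hr)
    · have := hmin (a := (s, s + (t - s) * x)) ⟨hsC', ⟨hxI, r, hr, l, hl, he⟩⟩
      simp only [mem_ofPred_eq] at this
      rw [show (s + (t - s) * x) - s = (t - s) * x by ring, abs_mul,
        abs_of_nonneg hx0] at this
      nlinarith
  let η : ℝ → ℂ := fun x => if x ≤ 1 / 2 then γ (s + (t - s) * (2 * x))
    else δ (q + (p - q) * (2 * x - 1)) + b
  have hη : Continuous η := by
    refine Continuous.if_le (by fun_prop) (by fun_prop) continuous_id continuous_const ?_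
    rintro x rfl
    norm_num
    exact eb
  obtain ⟨x, hx, y, hy, m, hxy⟩ := core' hη (n := b - a) (by omega) (by
    simp only [η]
    norm_num
    rw [ea]; ring)
  have hm : ∀ z : ℤ, (1 + (b - a) * m : ℤ) ≠ (b - a) * z := by
    intro z h0
    have : (b - a) ∣ 1 := ⟨z - m, by linarith⟩
    have := Int.le_of_dvd one_pos this
    omega
  generalize (1 + (b - a) * m : ℤ) = k at hm hxy
  have hη1 : ∀ x ∈ Ico (0 : ℝ) 1, x < 1 / 2 → η x = γ (s + (t - s) * (2 * x)) := by
    intro x _ hx; simp only [η]; rw [if_pos hx.le]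
  have hη2 : ∀ x ∈ Ico (0 : ℝ) 1, 1 / 2 ≤ x → η x = δ (q + (p - q) * (2 * x - 1)) + b := by
    intro x _ hx
    rcases hx.eq_or_lt with h | h
    · rw [← h]; simp only [η]; norm_num; exact eb
    · simp only [η]; rw [if_neg (not_le.2 h)]
  rcases lt_or_ge x (1 / 2) with hx2 | hx2 <;> rcases lt_or_ge y (1 / 2) with hy2 | hy2
  · rw [hη1 x hx hx2, hη1 y hy hy2] at hxy
    have := sg _ (hconv _ ⟨by linarith [hx.1], by linarith⟩) _
      (hconv _ ⟨by linarith [hy.1], by linarith⟩) k hxy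
    exact hm 0 (by simpa using this)
  · rw [hη1 x hx hx2, hη2 y hy hy2] at hxy
    have := hit (2 * x) (by linarith [hx.1]) (by linarith) _
      (hconv' (2 * y - 1) ⟨by linarith, by linarith [hy.2]⟩) (b + k)
      (by rw [hxy]; push_cast; ring)
    exact hm (-1) (by linarith)
  · rw [hη2 x hx hx2, hη1 y hy hy2] at hxy
    have := hit (2 * y) (by linarith [hy.1]) (by linarith) _
      (hconv' (2 * x - 1) ⟨by linarith, by linarith [hx.2]⟩) (b - k)
      (by push_cast; linear_combination -hxy)
    exact hm 1 (by linarith)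
  · rw [hη2 x hx hx2, hη2 y hy hy2] at hxy
    have := sd _ (hconv' (2 * x - 1) ⟨by linarith [hx.1], by linarith [hx.2]⟩) _
      (hconv' (2 * y - 1) ⟨by linarith [hy.1], by linarith [hy.2]⟩) k (by linear_combination hxy)
    exact hm 0 (by simpa using this)

theorem path_meets_translates
    (δ : Set.Icc (0 : ℝ) 1 → ℝ × ℝ) (hδc : Continuous δ) (hδi : Function.Injective δ)
    (hdisj : Set.range δ ∩ ((fun z : ℝ × ℝ => z + (1, 0)) '' Set.range δ) = ∅)
    (γ : Set.Icc (0 : ℝ) 1 → ℝ × ℝ) (hγc : Continuous γ)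
    (j : ℕ)
    (h0 : γ ⟨0, by norm_num⟩ ∈ Set.range δ)
    (h1 : γ ⟨1, by norm_num⟩ ∈ (fun z : ℝ × ℝ => z + ((j : ℝ), 0)) '' Set.range δ) :
    (∃ s t : Set.Icc (0 : ℝ) 1, γ s = γ t + (1, 0)) ∨
      ∀ i : ℕ, i ≤ j →
        (Set.range γ ∩ ((fun z : ℝ × ℝ => z + ((i : ℝ), 0)) '' Set.range δ)).Nonempty := by
  by_cases hg : ∃ s t : Set.Icc (0 : ℝ) 1, γ s = γ t + (1, 0)
  · exact Or.inl hg
  right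
  intro i hij
  rcases Nat.eq_zero_or_pos i with rfl | hi
  · obtain ⟨r, hr⟩ := h0
    exact ⟨_, ⟨_, rfl⟩, _, ⟨r, rfl⟩, by rw [← hr]; ext <;> simp⟩
  rcases hij.eq_or_lt with rfl | hij
  · exact ⟨_, ⟨_, rfl⟩, h1⟩
  let φ : ℝ × ℝ → ℂ := fun z => (z.1 : ℂ) + z.2 * Complex.I
  have hφ : Continuous φ := by fun_prop
  have hφe : ∀ (z w : ℝ × ℝ) (r : ℝ), φ z = φ w + (r : ℂ) ↔ z = w + (r, 0) := by
    intro z w r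
    simp [φ, Complex.ext_iff, Prod.ext_iff]
  let ext : (Set.Icc (0 : ℝ) 1 → ℝ × ℝ) → ℝ → ℂ := fun f x => φ (f (projIcc 0 1 zero_le_one x))
  have hext : ∀ f, Continuous f → Continuous (ext f) := fun f hf =>
    hφ.comp (hf.comp continuous_projIcc)
  have hv : ∀ f (x : Icc (0 : ℝ) 1), ext f x = φ (f x) := by
    intro f x; simp only [ext, projIcc_val]
  obtain ⟨s, hs, t, ht, hst⟩ := mainC (hext γ hγc) (hext δ hδc)
    (fun s hs t ht h => hg ⟨_, _, (hφe _ _ 1).1 (by simpa using h)⟩)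
    (fun s hs t ht h => by
      have := (hφe _ _ 1).1 (by simpa using h)
      have h2 : δ (projIcc 0 1 zero_le_one s) ∈
        Set.range δ ∩ ((fun z : ℝ × ℝ => z + (1, 0)) '' Set.range δ) :=
        ⟨⟨_, rfl⟩, _, ⟨_, rfl⟩, this.symm⟩
      rw [hdisj] at h2
      exact h2)
    i j (by exact_mod_cast hi) (by exact_mod_cast hij)
    (by
      obtain ⟨r, hr⟩ := h0
      refine ⟨r, r.2, ?_⟩
      rw [hv, hr]
      exact hv γ ⟨0, by norm_num⟩)
    (by
      obtain ⟨_, ⟨r, rfl⟩, hr⟩ := h1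
      refine ⟨r, r.2, ?_⟩
      rw [hv]
      refine (hv γ ⟨1, by norm_num⟩).trans ?_
      have := (hφe _ _ j).2 hr.symm
      simpa using this)
  exact ⟨_, ⟨_, rfl⟩, _, ⟨_, rfl⟩, ((hφe _ _ i).1 (by simpa using hst)).symm⟩
end

section
/- Let f be a homeomorphism of the open annulus 𝔸 = 𝕋¹ × ℝ which is isotopic to the identity and preserves a Borel probability measure of full support, and let f̌ be a lift of f to ℝ². Then for all integers r and s with s ≥ 1 and gcd(|r|, s) = 1 such that the rational number r/s belongs to the interior of rot(f̌) in [-∞,+∞], there exists a point ž ∈ ℝ² with f̌^s(ž) = ž + (r,0). -/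
open MeasureTheory Filter Topology Set

noncomputable section

def PIso (f : (ℝ × ℝ) ≃ₜ (ℝ × ℝ)) : Prop :=
  ∃ G : ℝ × (ℝ × ℝ) → ℝ × ℝ, Continuous G ∧ (∀ t, Function.Injective fun z => G (t, z)) ∧
    (∀ z, G (0, z) = z) ∧ ∀ z, G (1, z) = f z

def PCls (f : (ℝ × ℝ) ≃ₜ (ℝ × ℝ)) : Prop := PIso f ∧ ∀ x, f x ≠ x

theorem PIso.refl : PIso (Homeomorph.refl _) :=
  ⟨fun z => z.2, continuous_snd, fun _ _ _ h => h, fun _ => rfl, fun _ => rfl⟩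

theorem PIso.trans {f g : (ℝ × ℝ) ≃ₜ (ℝ × ℝ)} (hf : PIso f) (hg : PIso g) : PIso (f.trans g) := by
  obtain ⟨F, hF, iF, F0, F1⟩ := hf
  obtain ⟨G, hG, iG, G0, G1⟩ := hg
  refine ⟨fun p => G (p.1, F (p.1, p.2)), by fun_prop, fun t => (iG t).comp (iF t), ?_, ?_⟩
  · intro z; simp [F0, G0]
  · intro z; simp [F1, G1]

theorem PIso.symm {f : (ℝ × ℝ) ≃ₜ (ℝ × ℝ)} (hf : PIso f) : PIso f.symm := by
  obtain ⟨F, hF, iF, F0, F1⟩ := hf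
  refine ⟨fun p => f.symm (F (1 - p.1, p.2)), by fun_prop,
    fun t => f.symm.injective.comp (iF (1 - t)), ?_, ?_⟩
  · intro z; simp [F1]
  · intro z; simp [F0]

theorem PCls.symm {f : (ℝ × ℝ) ≃ₜ (ℝ × ℝ)} (hf : PCls f) : PCls f.symm :=
  ⟨hf.1.symm, fun x h => hf.2 x (by conv_lhs => rw [← h]
                                    simp)⟩

theorem exp_const {X : Type*} [TopologicalSpace X] [PreconnectedSpace X] (c d : X → ℂ)
    (hc : Continuous c) (hd : Continuous d) (k : ℂ)
    (h : ∀ x, Complex.exp (c x) = k * Complex.exp (d x)) (x y : X) :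
    c x - d x = c y - d y := by
  have := Complex.isCoveringMap_exp.eq_of_comp_eq (g₁ := fun z => c z - d z)
    (g₂ := fun z => c x - d x) (by fun_prop) (by fun_prop) (by
      funext z
      simp [Complex.exp_sub, h]) x rfl
  exact (congrFun this y).symm

theorem no_period_two {f : (ℝ × ℝ) ≃ₜ (ℝ × ℝ)} (hf : PCls f) (a : ℝ × ℝ) : f (f a) ≠ a := by
  intro ha
  obtain ⟨⟨G, hG, iG, G0, G1⟩, hfp⟩ := hf
  let e := Complex.equivRealProdCLM.symm
  let K : C(ℝ × (ℝ × ℝ), {z : ℂ // z ≠ 0}) :=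
    ⟨fun p => ⟨e (G (p.1, f p.2) - G (p.1, p.2)), by
      intro h
      have h2 := (map_eq_zero_iff e e.injective).1 h
      exact hfp p.2 (iG p.1 (sub_eq_zero.1 h2))⟩, by fun_prop⟩
  obtain ⟨κ, ⟨-, hκ⟩, -⟩ := Complex.isCoveringMap_exp.existsUnique_continuousMap_lifts K (0, a)
    (Complex.log (K (0, a))) (by ext; simp [Complex.exp_log (K (0,a)).2])
  have hk : ∀ p, Complex.exp (κ p) = e (G (p.1, f p.2) - G (p.1, p.2)) := by
    intro p
    exact congrArg Subtype.val (congrFun hκ p)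
  have h1 := exp_const (fun z : ℝ × ℝ => κ (1, z)) (fun z => κ (0, f z)) (by fun_prop) (by fun_prop)
    1 (by intro z; rw [hk, hk]; simp [G0, G1]) a (f a)
  have h2 := exp_const (fun t : ℝ => κ (t, f a)) (fun t => κ (t, a)) (by fun_prop) (by fun_prop)
    (-1) (by intro z; rw [hk, hk]; simp [ha]) 0 1
  have h3 : κ (0, f a) = κ (0, a) := by
    simp only [ha] at h1 h2
    linear_combination (1/2) * h2 - (1/2) * h1
  have h4 := hk (0, f a)
  rw [h3, hk] at h4
  have h5 := e.injective h4
  simp only [G0, ha] at h5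
  have h6 : f a - a = 0 := by
    have : (2:ℝ) • (f a - a) = 0 := by
      rw [two_smul]; nth_rewrite 2 [h5]; abel
    exact (smul_eq_zero.1 this).resolve_left (by norm_num)
  exact hfp a (sub_eq_zero.1 h6)

theorem local_push (c q : ℝ × ℝ) (ρ : ℝ) (hq : dist q c < ρ) :
    ∃ h : (ℝ × ℝ) ≃ₜ (ℝ × ℝ), PIso h ∧ h c = q ∧ ∀ x ∉ Metric.ball c ρ, h x = x := by
  have hρ : 0 < ρ := dist_nonneg.trans_lt hq
  set v := q - c with hv
  have hvn : ‖v‖ < ρ := by rwa [hv, ← dist_eq_norm]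
  let φ : ℝ × ℝ → ℝ := fun x => max 0 (1 - ‖x - c‖ / ρ)
  have hφc : Continuous φ := by fun_prop
  have hφ : ∀ x y, |φ x - φ y| ≤ ‖x - y‖ / ρ := by
    intro x y
    refine (abs_max_sub_max_le_max _ _ _ _).trans ?_
    rw [sub_self, abs_zero, max_eq_right (abs_nonneg _)]
    have : (1 - ‖x - c‖ / ρ) - (1 - ‖y - c‖ / ρ) = (‖y - c‖ - ‖x - c‖) / ρ := by ring
    rw [this, abs_div, abs_of_pos hρ]
    gcongr
    refine (abs_norm_sub_norm_le _ _).trans ?_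
    rw [norm_sub_rev]; simp
  have hk : ∀ t ∈ Set.Icc (0:ℝ) 1, ∀ x y, ‖(t * φ x) • v - (t * φ y) • v‖ ≤ (‖v‖ / ρ) * ‖x - y‖ := by
    intro t ht x y
    rw [← sub_smul, norm_smul, ← mul_sub, norm_mul, Real.norm_eq_abs, Real.norm_eq_abs,
      abs_of_nonneg ht.1]
    calc t * |φ x - φ y| * ‖v‖ ≤ 1 * (‖x - y‖ / ρ) * ‖v‖ := by
          gcongr
          · exact ht.2
          · exact hφ x y
      _ = _ := by ring
  have hlt : ‖v‖ / ρ < 1 := (div_lt_one hρ).2 hvn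
  let F : ℝ × ℝ → ℝ × ℝ := fun x => x + φ x • v
  have hA : ApproximatesLinearOn F ((ContinuousLinearEquiv.refl ℝ (ℝ × ℝ) : (ℝ × ℝ) ≃L[ℝ] (ℝ × ℝ)) : (ℝ × ℝ) →L[ℝ] (ℝ × ℝ)) univ
      (⟨‖v‖ / ρ, by positivity⟩ : NNReal) := by
    intro x _ y _
    have := hk 1 (by simp) x y
    simp only [one_mul] at this
    convert! this using 2
    simp [F]; abel
  have hc : Subsingleton (ℝ × ℝ) ∨ (⟨‖v‖ / ρ, by positivity⟩ : NNReal) < ‖((ContinuousLinearEquiv.refl ℝ (ℝ × ℝ)).symm : (ℝ × ℝ) →L[ℝ] (ℝ × ℝ))‖₊⁻¹ := by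
    right
    have : ‖((ContinuousLinearEquiv.refl ℝ (ℝ × ℝ)).symm : (ℝ × ℝ) →L[ℝ] (ℝ × ℝ))‖₊ = 1 := by
      have : ((ContinuousLinearEquiv.refl ℝ (ℝ × ℝ)).symm : (ℝ × ℝ) →L[ℝ] (ℝ × ℝ)) = ContinuousLinearMap.id ℝ _ := rfl
      rw [this]
      ext
      simp
    rw [this, inv_one]
    exact hlt
  let h := hA.toHomeomorph F hc
  have hh : ∀ x, h x = x + φ x • v := fun x => rfl
  refine ⟨h, ⟨fun p => p.2 + ((projIcc (0:ℝ) 1 zero_le_one p.1 : ℝ) * φ p.2) • v, ?_, ?_, ?_, ?_⟩, ?_, ?_⟩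
  · have : Continuous fun p : ℝ × (ℝ × ℝ) => (projIcc (0:ℝ) 1 zero_le_one p.1 : ℝ) :=
      continuous_subtype_val.comp (continuous_projIcc.comp continuous_fst)
    fun_prop
  · intro t x y hxy
    have h1 := hk _ (projIcc (0:ℝ) 1 zero_le_one t).2 y x
    have h2 : x - y = (↑(projIcc (0:ℝ) 1 zero_le_one t) * φ y) • v - (↑(projIcc (0:ℝ) 1 zero_le_one t) * φ x) • v := by
      dsimp only at hxy
      rw [sub_eq_sub_iff_add_eq_add, hxy]; abel
    rw [← h2, norm_sub_rev y x] at h1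
    by_contra hne
    have : 0 < ‖x - y‖ := norm_pos_iff.2 (sub_ne_zero.2 hne)
    nlinarith
  · intro z; simp [projIcc]
  · intro z; simp [projIcc, hh]
  · simp [hh, φ, hv]
  · intro x hx
    rw [hh]
    have : φ x = 0 := by
      rw [Metric.mem_ball, not_lt, dist_eq_norm] at hx
      apply max_eq_left
      rw [sub_nonpos, le_div_iff₀ hρ]; linarith
    simp [this]

theorem push {U : Set (ℝ × ℝ)} (hU : IsOpen U) (hc : IsPreconnected U) {p q : ℝ × ℝ} (hp : p ∈ U)
    (hq : q ∈ U) :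
    ∃ h : (ℝ × ℝ) ≃ₜ (ℝ × ℝ), PIso h ∧ h p = q ∧ ∀ x ∉ U, h x = x := by
  refine hc.induction₂ (fun p q => ∃ h : (ℝ × ℝ) ≃ₜ (ℝ × ℝ), PIso h ∧ h p = q ∧ ∀ x ∉ U, h x = x)
    ?_ ?_ ?_ hp hq
  · intro x hx
    obtain ⟨ρ, hρ, hb⟩ := Metric.isOpen_iff.1 hU x hx
    filter_upwards [mem_nhdsWithin_of_mem_nhds (Metric.ball_mem_nhds x hρ)] with y hy
    obtain ⟨h, h1, h2, h3⟩ := local_push x y ρ hy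
    exact ⟨h, h1, h2, fun z hz => h3 z fun hz' => hz (hb hz')⟩
  · rintro x y z _ _ _ ⟨h, h1, h2, h3⟩ ⟨k, k1, k2, k3⟩
    refine ⟨h.trans k, h1.trans k1, by simp [h2, k2], fun w hw => by simp [h3 w hw, k3 w hw]⟩
  · rintro x y _ _ ⟨h, h1, h2, h3⟩
    refine ⟨h.symm, h1.symm, by simp [← h2], fun w hw => ?_⟩
    rw [Homeomorph.symm_apply_eq, h3 w hw]

def PFree (f : (ℝ × ℝ) ≃ₜ (ℝ × ℝ)) (U : Set (ℝ × ℝ)) : Prop := ∀ x ∈ U, f x ∉ U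

theorem perturb1 {f : (ℝ × ℝ) ≃ₜ (ℝ × ℝ)} (hf : PCls f) {U : Set (ℝ × ℝ)} (hU : IsOpen U)
    (hc : IsPreconnected U) (hfr : PFree f U) {p q : ℝ × ℝ} (hp : p ∈ U) (hq : q ∈ U) :
    ∃ f' : (ℝ × ℝ) ≃ₜ (ℝ × ℝ), PCls f' ∧ (∀ x, f x = p → f' x = q) ∧
      (∀ x, f x ∉ U → f' x = f x) ∧ (∀ x, f x ∈ U → f' x ∈ U) := by
  obtain ⟨h, h1, h2, h3⟩ := push hU hc hp hq
  have h4 : ∀ x ∈ U, h x ∈ U := by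
    intro x hx
    by_contra hn
    have := h.injective (h3 _ hn)
    rw [this] at hn
    exact hn hx
  refine ⟨f.trans h, ⟨hf.1.trans h1, ?_⟩, ?_, ?_, ?_⟩
  · intro x hx
    by_cases hxU : f x ∈ U
    · have := h4 _ hxU
      simp only [Homeomorph.trans_apply] at hx
      rw [hx] at this
      exact hfr x this hxU
    · rw [Homeomorph.trans_apply, h3 _ hxU] at hx
      exact hf.2 x hx
  · intro x hx; simp [hx, h2]
  · intro x hx; simp [h3 _ hx]
  · intro x hx; exact h4 _ hx

theorem free_nhd (f : (ℝ × ℝ) ≃ₜ (ℝ × ℝ)) {K : Set (ℝ × ℝ)} (hK : IsCompact K) (hfr : PFree f K) :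
    ∃ O, IsOpen O ∧ K ⊆ O ∧ PFree f O := by
  have hd : Disjoint K (f '' K) := by
    rw [Set.disjoint_right]
    rintro _ ⟨x, hx, rfl⟩ h
    exact hfr x hx h
  obtain ⟨A, B, hA, hB, hKA, hKB, hAB⟩ := SeparatedNhds.of_isCompact_isCompact hK (hK.image f.continuous) hd
  refine ⟨A ∩ f ⁻¹' B, hA.inter (hB.preimage f.continuous), fun x hx => ⟨hKA hx, hKB ⟨x, hx, rfl⟩⟩, ?_⟩
  rintro x ⟨_, hx⟩ ⟨hx2, _⟩
  exact Set.disjoint_left.1 hAB hx2 hx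

theorem conn_nhd {K O : Set (ℝ × ℝ)} (hK : IsPreconnected K) (hne : K.Nonempty) (hO : IsOpen O)
    (hKO : K ⊆ O) : ∃ U, IsOpen U ∧ IsPreconnected U ∧ K ⊆ U ∧ U ⊆ O := by
  obtain ⟨x, hx⟩ := hne
  exact ⟨connectedComponentIn O x, hO.connectedComponentIn, isPreconnected_connectedComponentIn,
    hK.subset_connectedComponentIn hx hKO, connectedComponentIn_subset _ _⟩

/-- no returns at time `j` -/
def NoRet (j : ℕ) : Prop := ∀ f : (ℝ × ℝ) ≃ₜ (ℝ × ℝ), PCls f → ∀ U : Set (ℝ × ℝ), IsOpen U →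
  IsPreconnected U → PFree f U → ∀ a ∈ U, (⇑f)^[j] a ∉ U

theorem noRet_K {j : ℕ} (h : NoRet j) {f : (ℝ × ℝ) ≃ₜ (ℝ × ℝ)} (hf : PCls f) {K : Set (ℝ × ℝ)}
    (hK : IsCompact K) (hc : IsPreconnected K) (hfr : PFree f K) {a : ℝ × ℝ} (ha : a ∈ K) :
    (⇑f)^[j] a ∉ K := by
  obtain ⟨O, hO, hKO, hOf⟩ := free_nhd f hK hfr
  obtain ⟨U, hU, hUc, hKU, hUO⟩ := conn_nhd hc ⟨a, ha⟩ hO hKO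
  intro h2
  exact h f hf U hU hUc (fun x hx h => hOf x (hUO hx) (hUO h)) a (hKU ha) (hKU h2)

theorem noRet_per {j : ℕ} (h : NoRet j) {f : (ℝ × ℝ) ≃ₜ (ℝ × ℝ)} (hf : PCls f) (a : ℝ × ℝ) :
    (⇑f)^[j] a ≠ a := by
  intro h2
  exact noRet_K h hf (K := {a}) isCompact_singleton isPreconnected_singleton
    (by intro x hx h; simp at hx h; subst hx; exact hf.2 _ h) rfl h2

theorem caseA {n : ℕ} (hn : 3 ≤ n) (IH : ∀ j, 1 ≤ j → j < n → NoRet j)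
    {f : (ℝ × ℝ) ≃ₜ (ℝ × ℝ)} (hf : PCls f) (γ : ℝ → ℝ × ℝ) (hγc : Continuous γ)
    (hγi : Function.Injective γ) (hper : (⇑f)^[n] (γ 0) = γ 0) {s t : ℝ} (hs : 0 ≤ s) (hst : s < t)
    (hfst : f (γ s) = γ t)
    (hfree : ∀ u w, 0 ≤ u → u < t → 0 ≤ w → w < t → f (γ u) ≠ γ w) : False := by
  have cpt : ∀ a b, IsCompact (γ '' Icc a b) := fun a b => isCompact_Icc.image hγc
  have pre : ∀ a b, IsPreconnected (γ '' Icc a b) := fun a b =>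
    isPreconnected_Icc.image _ hγc.continuousOn
  have F0 : ∀ u, u < t → PFree f (γ '' Icc 0 u) := by
    rintro u hu _ ⟨a, ha, rfl⟩ ⟨b, hb, h⟩
    exact hfree a b ha.1 (ha.2.trans_lt hu) hb.1 (hb.2.trans_lt hu) h.symm
  have P2 : ∀ u w, 0 ≤ u → u < t → 0 ≤ w → w < t → f (f (γ u)) ≠ γ w := by
    intro u w hu hut hw hwt h
    exact noRet_K (IH 2 (by omega) (by omega)) hf (cpt 0 (max u w)) (pre _ _) (F0 _ (max_lt hut hwt))
      (a := γ u) ⟨u, ⟨hu, le_max_left _ _⟩, rfl⟩ ⟨w, ⟨hw, le_max_right _ _⟩, h.symm⟩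
  have F3 : ∀ w, 0 ≤ w → w < t → f (γ t) ≠ γ w := by
    intro w hw hwt h
    rw [← hfst] at h
    exact P2 s w hs hst hw hwt h
  obtain ⟨m, hsm, hmt⟩ := exists_between hst
  have F4 : ∀ u w, 0 ≤ u → u ≤ t → s < u → 0 ≤ w → w ≤ t → f (γ u) ≠ γ w := by
    intro u w hu hut hsu hw hwt h
    rcases hwt.lt_or_eq with h1 | h1
    · rcases hut.lt_or_eq with h2 | h2
      · exact hfree u w hu h2 hw h1 h
      · subst h2; exact F3 w hw h1 h
    · subst h1; rw [← hfst] at h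
      exact hsu.ne' (hγi (f.injective h))
  have F5 : ∀ u w, 0 ≤ u → u ≤ s → 0 ≤ w → w ≤ t → f (f (γ u)) ≠ γ w := by
    intro u w hu hus hw hwt h
    rcases hwt.lt_or_eq with h1 | h1
    · exact P2 u w hu (hus.trans_lt hst) hw h1 h
    · subst h1; rw [← hfst] at h
      exact hfree u s hu (hus.trans_lt hst) hs hst (f.injective h)
  have hm0 : 0 ≤ m := hs.trans hsm.le
  set K1 := γ '' Icc 0 m with hK1
  set K2 := γ '' Icc m t ∪ f '' (γ '' Icc 0 s) with hK2
  have cK2 : IsCompact K2 := (cpt _ _).union ((cpt _ _).image f.continuous)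
  have pK2 : IsPreconnected K2 := by
    refine IsPreconnected.union (γ t) ⟨t, ⟨hmt.le, le_rfl⟩, rfl⟩
      ⟨γ s, ⟨s, ⟨hs, le_rfl⟩, rfl⟩, hfst⟩ (pre _ _) ((pre _ _).image _ f.continuous.continuousOn)
  have fr2 : PFree f K2 := by
    rintro _ (⟨a, ha, rfl⟩ | ⟨_, ⟨a, ha, rfl⟩, rfl⟩) (⟨b, hb, h⟩ | ⟨_, ⟨b, hb, rfl⟩, h⟩)
    · exact F4 a b (hm0.trans ha.1) ha.2 (hsm.trans_le ha.1) (hm0.trans hb.1) hb.2 h.symm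
    · have := hγi (f.injective h)
      linarith [ha.1, hb.2]
    · exact F5 a b ha.1 ha.2 (hm0.trans hb.1) hb.2 h.symm
    · exact hfree a b ha.1 (ha.2.trans_lt hst) hb.1 (hb.2.trans_lt hst) (f.injective h).symm
  have hdis : Disjoint K1 (f '' K2) := by
    rw [Set.disjoint_left]
    rintro _ ⟨b, hb, rfl⟩ ⟨_, (⟨a, ha, rfl⟩ | ⟨_, ⟨a, ha, rfl⟩, rfl⟩), h⟩
    · exact F4 a b (hm0.trans ha.1) ha.2 (hsm.trans_le ha.1) hb.1 (hb.2.trans hmt.le) h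
    · exact F5 a b ha.1 ha.2 hb.1 (hb.2.trans hmt.le) h
  obtain ⟨O1, hO1, hKO1, hfO1⟩ := free_nhd f (cpt 0 m) (F0 m hmt)
  obtain ⟨O2, hO2, hKO2, hfO2⟩ := free_nhd f cK2 fr2
  obtain ⟨A, B, hA, hB, hKA, hKB, hAB⟩ :=
    SeparatedNhds.of_isCompact_isCompact (cpt 0 m) (cK2.image f.continuous) hdis
  have h0K1 : γ 0 ∈ K1 := ⟨0, ⟨le_rfl, hm0⟩, rfl⟩
  have hmK1 : γ m ∈ K1 := ⟨m, ⟨hm0, le_rfl⟩, rfl⟩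
  have hmK2 : γ m ∈ K2 := Or.inl ⟨m, ⟨le_rfl, hmt.le⟩, rfl⟩
  have h1K2 : f (γ 0) ∈ K2 := Or.inr ⟨γ 0, ⟨0, ⟨le_rfl, hs⟩, rfl⟩, rfl⟩
  obtain ⟨V1, oV1, pV1, kV1, sV1⟩ := conn_nhd (pre 0 m) ⟨_, h0K1⟩ (hO1.inter hA)
    (subset_inter hKO1 hKA)
  obtain ⟨V2, oV2, pV2, kV2, sV2⟩ := conn_nhd pK2 ⟨_, hmK2⟩ (hO2.inter (hB.preimage f.continuous))
    (subset_inter hKO2 (fun x hx => hKB ⟨x, hx, rfl⟩))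
  have fV1 : PFree f V1 := fun x hx h => hfO1 x (sV1 hx).1 (sV1 h).1
  have fV2 : PFree f V2 := fun x hx h => hfO2 x (sV2 hx).1 (sV2 h).1
  have dV : ∀ x, x ∈ V1 → x ∉ f '' V2 := by
    rintro _ hx ⟨y, hy, rfl⟩
    exact Set.disjoint_left.1 hAB (sV1 hx).2 (sV2 hy).2
  obtain ⟨f1, hf1, e1, i1, m1⟩ := perturb1 hf oV1 pV1 fV1 (kV1 h0K1) (kV1 hmK1)
  have fU2 : PFree f1 (f '' V2) := by
    rintro _ ⟨x, hx, rfl⟩ h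
    by_cases hc : f (f x) ∈ V1
    · exact dV _ (m1 _ hc) h
    · rw [i1 _ hc] at h
      obtain ⟨y, hy, h⟩ := h
      have := f.injective h
      subst this
      exact fV2 _ hx hy
  obtain ⟨f2, hf2, e2, i2, -⟩ := perturb1 hf1 (f.isOpenMap _ oV2)
    (pV2.image _ f.continuous.continuousOn) fU2 ⟨_, kV2 hmK2, rfl⟩ ⟨_, kV2 h1K2, rfl⟩
  have x1 : ∀ j, 1 ≤ j → j < n → (⇑f)^[j] (γ 0) ∉ V1 := fun j h1 h2 =>
    IH j h1 h2 f hf V1 oV1 pV1 fV1 _ (kV1 h0K1)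
  have x2 : ∀ j, 3 ≤ j → j < n → (⇑f)^[j] (γ 0) ∉ f '' V2 := by
    rintro j h1 h2 ⟨y, hy, h⟩
    obtain ⟨i, rfl⟩ : ∃ i, j = i + 2 := ⟨j - 2, by omega⟩
    rw [show i + 2 = (i + 1) + 1 from rfl, Function.iterate_succ_apply'] at h
    have := f.injective h
    rw [Function.iterate_succ_apply] at this
    exact IH i (by omega) (by omega) f hf V2 oV2 pV2 fV2 _ (kV2 h1K2) (this ▸ hy)
  have o1 : f2 (γ m) = f (f (γ 0)) := by
    apply e2
    apply i1
    intro h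
    exact dV _ h ⟨_, kV2 hmK2, rfl⟩
  have o2 : ∀ i, i + 3 ≤ n → (⇑f2)^[i] (f (f (γ 0))) = (⇑f)^[i + 2] (γ 0) := by
    intro i
    induction i with
    | zero => intro _; rfl
    | succ i ih =>
      intro hi
      rw [Function.iterate_succ_apply', ih (by omega), show i + 1 + 2 = (i + 2) + 1 from rfl,
        Function.iterate_succ_apply' f (i + 2)]
      have h1 := x1 (i + 2 + 1) (by omega) (by omega)
      have h2 := x2 (i + 2 + 1) (by omega) (by omega)
      rw [Function.iterate_succ_apply'] at h1 h2
      have h3 := i1 _ h1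
      rw [i2 _ (by rwa [h3]), h3]
  have o3 : f2 ((⇑f)^[n - 1] (γ 0)) = γ m := by
    have h1 : f ((⇑f)^[n - 1] (γ 0)) = γ 0 := by
      rw [← Function.iterate_succ_apply' f, show (n - 1).succ = n by omega, hper]
    have h2 := e1 _ h1
    rw [i2 _ (by rw [h2]; exact dV _ (kV1 hmK1)), h2]
  have o4 : (⇑f2)^[n - 1] (γ m) = γ m := by
    have : n - 1 = (n - 3) + 1 + 1 := by omega
    rw [this, Function.iterate_succ_apply, o1, Function.iterate_succ_apply', o2 _ (by omega)]
    rw [show n - 3 + 2 = n - 1 by omega, o3]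
  exact noRet_per (IH (n - 1) (by omega) (by omega)) hf2 _ o4

theorem reduce {n : ℕ} (hn : 3 ≤ n) (IH : ∀ j, 1 ≤ j → j < n → NoRet j)
    {f : (ℝ × ℝ) ≃ₜ (ℝ × ℝ)} (hf : PCls f) (x : ℝ × ℝ) : (⇑f)^[n] x ≠ x := by
  intro hper
  set v := f x - x with hv
  have hv0 : v ≠ 0 := sub_ne_zero.2 (hf.2 x)
  let γ : ℝ → ℝ × ℝ := fun u => x + u • v
  have hγc : Continuous γ := by fun_prop
  have hγi : Function.Injective γ := by
    intro a b h
    exact smul_left_injective ℝ hv0 (add_left_cancel h)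
  have hγ0 : γ 0 = x := by simp [γ]
  have hγ1 : γ 1 = f x := by simp [γ, hv]
  let S : Set (ℝ × ℝ) := (Icc (0:ℝ) 1 ×ˢ Icc (0:ℝ) 1) ∩
    ({p | p.1 ≤ p.2} ∩ ({p | f (γ p.1) = γ p.2} ∪ {p | f (γ p.2) = γ p.1}))
  have hS : IsCompact S := by
    refine (isCompact_Icc.prod isCompact_Icc).inter_right ?_
    refine (isClosed_le continuous_fst continuous_snd).inter (IsClosed.union ?_ ?_)
    · exact isClosed_eq (by fun_prop) (by fun_prop)
    · exact isClosed_eq (by fun_prop) (by fun_prop)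
  have hne : S.Nonempty := ⟨(0, 1), by simp [S, hγ0, hγ1]⟩
  obtain ⟨⟨s, t⟩, ⟨⟨hs, ht⟩, hst, hor⟩, hmin⟩ := hS.exists_isMinOn hne continuous_snd.continuousOn
  simp only [mem_ofPred_eq] at hst hor hs ht
  have key : ∀ u w, 0 ≤ u → u < t → 0 ≤ w → w < t → f (γ u) ≠ γ w := by
    intro u w hu hut hw hwt h
    rcases le_total u w with huw | huw
    · have : (u, w) ∈ S := ⟨⟨⟨hu, hut.le.trans ht.2⟩, ⟨hw, hwt.le.trans ht.2⟩⟩, huw, Or.inl h⟩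
      have := hmin this
      simp at this; linarith
    · have : (w, u) ∈ S := ⟨⟨⟨hw, hwt.le.trans ht.2⟩, ⟨hu, hut.le.trans ht.2⟩⟩, huw, Or.inr h⟩
      have := hmin this
      simp at this; linarith
  have hlt : s < t := by
    refine lt_of_le_of_ne hst ?_
    rintro rfl
    rcases hor with h | h <;> exact hf.2 _ h
  rcases hor with h | h
  · exact caseA hn IH hf γ hγc hγi (by rw [hγ0, hper]) hs.1 hlt h key
  · refine caseA hn IH hf.symm γ hγc hγi ?_ hs.1 hlt (by rw [← h]; simp) ?_
    · rw [hγ0]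
      have := (Function.LeftInverse.iterate f.symm_apply_apply n) x
      rwa [hper] at this
    · intro u w hu hut hw hwt h'
      exact key w u hw hwt hu hut (by rw [← h']; simp)

theorem noRet : ∀ n, 1 ≤ n → NoRet n := by
  intro n
  induction n using Nat.strong_induction_on with
  | _ n ih =>
    intro hn f hf U hU hUc hfr a ha hr
    have IH : ∀ j, 1 ≤ j → j < n → NoRet j := fun j h1 h2 => ih j h2 h1
    rcases Nat.lt_or_ge n 2 with h1 | h2
    · obtain rfl : n = 1 := by omega
      exact hfr a ha hr
    obtain ⟨f', hf', e, i, -⟩ := perturb1 hf hU hUc hfr hr ha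
    have o : ∀ j, j < n → (⇑f')^[j] a = (⇑f)^[j] a := by
      intro j
      induction j with
      | zero => intro _; rfl
      | succ j ihj =>
        intro hj
        rw [Function.iterate_succ_apply', Function.iterate_succ_apply', ihj (by omega)]
        apply i
        rw [← Function.iterate_succ_apply' f]
        exact IH (j + 1) (by omega) hj f hf U hU hUc hfr a ha
    have o2 : (⇑f')^[n] a = a := by
      obtain ⟨k, rfl⟩ : ∃ k, n = k + 1 := ⟨n - 1, by omega⟩
      rw [Function.iterate_succ_apply', o _ (by omega)]
      apply e
      rw [Function.iterate_succ_apply']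
    rcases Nat.lt_or_ge n 3 with h3 | h3
    · obtain rfl : n = 2 := by omega
      exact no_period_two hf' a o2
    · exact reduce h3 IH hf' a o2

theorem no_periodic {f : (ℝ × ℝ) ≃ₜ (ℝ × ℝ)} (hf : PCls f) (n : ℕ) (hn : 1 ≤ n) (a : ℝ × ℝ) :
    (⇑f)^[n] a ≠ a := noRet_per (noRet n hn) hf a

theorem multi_perturb {f : (ℝ × ℝ) ≃ₜ (ℝ × ℝ)} (hf : PCls f) (N : ℕ) (x q : ℕ → ℝ × ℝ)
    (U : ℕ → Set (ℝ × ℝ)) (hU : ∀ i < N, IsOpen (U i)) (hc : ∀ i < N, IsPreconnected (U i))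
    (hfr : ∀ i < N, PFree f (U i)) (hx : ∀ i < N, f (x i) ∈ U i) (hq : ∀ i < N, q i ∈ U i)
    (hd : ∀ i < N, ∀ j < N, i ≠ j → Disjoint (U i) (U j)) :
    ∀ k ≤ N, ∃ f' : (ℝ × ℝ) ≃ₜ (ℝ × ℝ), PCls f' ∧ (∀ i < N, PFree f' (U i)) ∧
      (∀ i < k, f' (x i) = q i) ∧ ∀ i, k ≤ i → i < N → f' (x i) = f (x i) := by
  intro k
  induction k with
  | zero => intro _; exact ⟨f, hf, hfr, by simp, fun _ _ _ => rfl⟩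
  | succ k ih =>
    intro hk
    obtain ⟨f1, h1, h2, h3, h4⟩ := ih (by omega)
    obtain ⟨f2, g1, g2, g3, g4⟩ := perturb1 h1 (hU k hk) (hc k hk) (h2 k hk) (hx k hk) (hq k hk)
    have hdd : ∀ i < N, i ≠ k → ∀ z ∈ U i, z ∉ U k := fun i hi hik z hz hz2 =>
      Set.disjoint_left.1 (hd i hi k hk hik) hz hz2
    refine ⟨f2, g1, ?_, ?_, ?_⟩
    · intro i hi z hz hz2
      by_cases hm : f1 z ∈ U k
      · by_cases hik : i = k
        · subst hik
          exact h2 i hi z hz hm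
        · exact hdd i hi hik _ hz2 (g4 z hm)
      · rw [g3 z hm] at hz2
        exact h2 i hi z hz hz2
    · intro i hi
      by_cases hik : i = k
      · subst hik
        exact g2 _ (h4 i le_rfl hk)
      · have hik2 : i < k := by omega
        rw [g3, h3 i hik2]
        rw [h3 i hik2]
        exact hdd i (by omega) hik _ (hq i (by omega))
    · intro i hi hiN
      rw [g3, h4 i (by omega) hiN]
      rw [h4 i (by omega) hiN]
      exact hdd i hiN (by omega) _ (hx i hiN)

theorem no_disj_cycle {f : (ℝ × ℝ) ≃ₜ (ℝ × ℝ)} (hf : PCls f) (N : ℕ) (hN : 1 ≤ N)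
    (x : ℕ → ℝ × ℝ) (hx0 : x N = x 0)
    (hfr : ∀ i < N, PFree f (segment ℝ (f (x i)) (x (i + 1))))
    (hd : ∀ i < N, ∀ j < N, i ≠ j →
      Disjoint (segment ℝ (f (x i)) (x (i + 1))) (segment ℝ (f (x j)) (x (j + 1)))) : False := by
  set K : ℕ → Set (ℝ × ℝ) := fun i => segment ℝ (f (x i)) (x (i + 1)) with hK
  have hKc : ∀ i, IsCompact (K i) := by
    intro i
    simp only [hK, segment_eq_image_lineMap]
    exact isCompact_Icc.image (by fun_prop)
  have hKp : ∀ i, IsPreconnected (K i) := fun i => (convex_segment _ _).isPreconnected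
  have hO : ∀ i, ∃ O, i < N → IsOpen O ∧ K i ⊆ O ∧ PFree f O := by
    intro i
    by_cases hi : i < N
    · obtain ⟨O, h⟩ := free_nhd f (hKc i) (hfr i hi)
      exact ⟨O, fun _ => h⟩
    · exact ⟨∅, fun h => absurd h hi⟩
  choose O hO using hO
  have hV : ∀ i j, ∃ V : Set (ℝ × ℝ) × Set (ℝ × ℝ), i < N → j < N → i ≠ j →
      IsOpen V.1 ∧ IsOpen V.2 ∧ K i ⊆ V.1 ∧ K j ⊆ V.2 ∧ Disjoint V.1 V.2 := by
    intro i j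
    by_cases h : i < N ∧ j < N ∧ i ≠ j
    · obtain ⟨A, B, hAB⟩ := SeparatedNhds.of_isCompact_isCompact (hKc i) (hKc j)
        (hd i h.1 j h.2.1 h.2.2)
      exact ⟨(A, B), fun _ _ _ => hAB⟩
    · exact ⟨(∅, ∅), fun h1 h2 h3 => absurd ⟨h1, h2, h3⟩ h⟩
  choose V hV using hV
  let W : ℕ → Set (ℝ × ℝ) := fun i => O i ∩
    ⋂ j ∈ (Finset.range N).filter (fun j => i ≠ j), ((V i j).1 ∩ (V j i).2)
  have hW : ∀ i, ∃ U, i < N → IsOpen U ∧ IsPreconnected U ∧ K i ⊆ U ∧ U ⊆ W i := by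
    intro i
    by_cases hi : i < N
    · obtain ⟨U, h⟩ := conn_nhd (O := W i) (hKp i) ⟨_, left_mem_segment ℝ _ _⟩ (by
        refine (hO i hi).1.inter (isOpen_biInter_finset fun j hj => ?_)
        simp only [Finset.mem_filter, Finset.mem_range] at hj
        exact (hV i j hi hj.1 hj.2).1.inter (hV j i hj.1 hi (Ne.symm hj.2)).2.1) (by
        refine subset_inter (hO i hi).2.1 (subset_iInter₂ fun j hj => ?_)
        simp only [Finset.mem_filter, Finset.mem_range] at hj
        exact subset_inter (hV i j hi hj.1 hj.2).2.2.1
          (hV j i hj.1 hi (Ne.symm hj.2)).2.2.2.1)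
      exact ⟨U, fun _ => h⟩
    · exact ⟨∅, fun h => absurd h hi⟩
  choose U hU using hW
  obtain ⟨f', h1, -, h3, -⟩ := multi_perturb hf N x (fun i => x (i + 1)) U
    (fun i hi => (hU i hi).1) (fun i hi => (hU i hi).2.1)
    (fun i hi z hz hz2 => (hO i hi).2.2 z ((hU i hi).2.2.2 hz).1 ((hU i hi).2.2.2 hz2).1)
    (fun i hi => (hU i hi).2.2.1 (left_mem_segment ℝ _ _))
    (fun i hi => (hU i hi).2.2.1 (right_mem_segment ℝ _ _))
    (by
      intro i hi j hj hij
      refine (hV i j hi hj hij).2.2.2.2.mono ?_ ?_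
      · intro z hz
        have := ((hU i hi).2.2.2 hz).2
        simp only [mem_iInter] at this
        exact (this j (by simp [hj, hij])).1
      · intro z hz
        have := ((hU j hj).2.2.2 hz).2
        simp only [mem_iInter] at this
        exact (this i (by simp [hi, hij.symm])).2) N le_rfl
  have hit : ∀ k ≤ N, (⇑f')^[k] (x 0) = x k := by
    intro k
    induction k with
    | zero => intro _; rfl
    | succ k ih => intro hk; rw [Function.iterate_succ_apply', ih (by omega), h3 k (by omega)]
  exact no_periodic h1 N hN (x 0) ((hit N le_rfl).trans hx0)

def PJ (S : Set (ℝ × ℝ)) (ε : ℝ) (p q : ℝ × ℝ) : Prop := p = q ∨ (p ∈ S ∧ q ∈ S ∧ dist p q < ε)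

theorem PJ.exchange {S : Set (ℝ × ℝ)} (hS : Convex ℝ S) {ε : ℝ} {p q p' q' z : ℝ × ℝ}
    (h : PJ S ε p q) (h' : PJ S ε p' q') (hz : z ∈ segment ℝ p q) (hz' : z ∈ segment ℝ p' q') :
    PJ S ε p q' ∨ PJ S ε p' q := by
  have e1 := dist_add_dist_of_mem_segment hz
  have e2 := dist_add_dist_of_mem_segment hz'
  rcases h with rfl | ⟨hp, hq, hd⟩
  · simp only [segment_same, mem_singleton_iff] at hz
    subst hz
    rcases h' with rfl | ⟨hp', hq', hd'⟩
    · simp only [segment_same, mem_singleton_iff] at hz'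
      exact Or.inl (Or.inl hz')
    · refine Or.inl (Or.inr ⟨hS.segment_subset hp' hq' hz', hq', ?_⟩)
      linarith [dist_nonneg (x := p') (y := z)]
  · rcases h' with rfl | ⟨hp', hq', hd'⟩
    · simp only [segment_same, mem_singleton_iff] at hz'
      subst hz'
      refine Or.inr (Or.inr ⟨hS.segment_subset hp hq hz, hq, ?_⟩)
      linarith [dist_nonneg (x := p) (y := z)]
    · have t1 := dist_triangle p z q'
      have t2 := dist_triangle p' z q
      by_cases hh : dist p q' < ε
      · exact Or.inl (Or.inr ⟨hp, hq', hh⟩)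
      · exact Or.inr (Or.inr ⟨hp', hq, by linarith⟩)

theorem PJ.free {f : (ℝ × ℝ) ≃ₜ (ℝ × ℝ)} (hf : PCls f) {S : Set (ℝ × ℝ)} (hS : Convex ℝ S) {ε : ℝ}
    (hε : ∀ z ∈ S, ε ≤ dist (f z) z) {p q : ℝ × ℝ} (h : PJ S ε p q) : PFree f (segment ℝ p q) := by
  intro u hu hv
  rcases h with rfl | ⟨hp, hq, hd⟩
  · simp only [segment_same, mem_singleton_iff] at hu hv
    subst hu
    exact hf.2 _ hv
  · have e1 := dist_add_dist_of_mem_segment hu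
    have e2 := dist_add_dist_of_mem_segment hv
    have := hε u (hS.segment_subset hp hq hu)
    have t1 := dist_triangle_left (f u) u p
    have t2 := dist_triangle_right (f u) u q
    linarith

theorem no_chain {f : (ℝ × ℝ) ≃ₜ (ℝ × ℝ)} (hf : PCls f) {S : Set (ℝ × ℝ)} (hS : Convex ℝ S) {ε : ℝ}
    (hε : ∀ z ∈ S, ε ≤ dist (f z) z) : ¬ ∃ N, 1 ≤ N ∧ ∃ x : ℕ → ℝ × ℝ, x N = x 0 ∧
      ∀ i < N, PJ S ε (f (x i)) (x (i + 1)) := by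
  classical
  intro hex
  have hmin : ∀ m < Nat.find hex, ¬ _ := fun m hm => Nat.find_min hex hm
  obtain ⟨hN, x, hx0, hx⟩ := Nat.find_spec hex
  set N := Nat.find hex with hNdef
  clear_value N
  have key : ∀ i j, i < j → j < N → Disjoint (segment ℝ (f (x i)) (x (i + 1)))
      (segment ℝ (f (x j)) (x (j + 1))) := by
    intro i j hij hj
    rw [Set.disjoint_left]
    intro z hz hz'
    rcases (hx i (by omega)).exchange hS (hx j hj) hz hz' with h | h
    · refine hmin (N - (j - i)) (by omega) ⟨by omega,
        fun k => if k ≤ i then x k else x (k + (j - i)), ?_, ?_⟩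
      · have a1 : ¬ (N - (j - i) ≤ i) := by omega
        have a2 : N - (j - i) + (j - i) = N := by omega
        simp [a1, a2, hx0]
      · intro k hk
        by_cases c : k + 1 ≤ i
        · have c2 : k ≤ i := by omega
          simp only [c, c2, if_true]
          exact hx k (by omega)
        · by_cases c2 : k ≤ i
          · have c3 : k = i := by omega
            subst c3
            have c4 : k + 1 + (j - k) = j + 1 := by omega
            simpa [c4] using h
          · have c4 : k + 1 + (j - i) = k + (j - i) + 1 := by omega
            simp only [c, c2, if_false, c4]
            exact hx _ (by omega)
    · refine hmin (j - i) (by omega) ⟨by omega,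
        fun k => if k < j - i then x (i + 1 + k) else x (i + 1), ?_, ?_⟩
      · have : 0 < j - i := by omega
        simp [this]
      · intro k hk
        by_cases c : k + 1 < j - i
        · simp only [c, hk, if_true]
          exact hx _ (by omega)
        · have c4 : i + 1 + k = j := by omega
          simp only [c, hk, if_true, if_false, c4]
          exact h
  refine no_disj_cycle hf N hN x hx0 (fun i hi => (hx i hi).free hf hS hε) ?_
  intro i hi j hj hij
  rcases lt_or_gt_of_ne hij with h | h
  · exact key i j h hj
  · exact (key j i h hi).symm

def PV (k : ℤ) : ℝ × ℝ := ((k : ℝ), 0)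

theorem PV_add (a b : ℤ) : PV (a + b) = PV a + PV b := by simp [PV]
theorem PV_zero : PV 0 = 0 := by simp [PV]
theorem PV_neg (a : ℤ) : PV (-a) = -PV a := by simp [PV]

def PStrip (M : ℝ) : Set (ℝ × ℝ) := {z | |z.2| ≤ M}

theorem PStrip_V {M : ℝ} {z : ℝ × ℝ} {k : ℤ} : z + PV k ∈ PStrip M ↔ z ∈ PStrip M := by
  simp [PStrip, PV]

theorem PStrip_convex (M : ℝ) : Convex ℝ (PStrip M) := by
  have : PStrip M = (LinearMap.snd ℝ ℝ ℝ) ⁻¹' (Icc (-M) M) := by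
    ext z
    simp [PStrip, abs_le]
  rw [this]
  exact (convex_Icc _ _).linear_preimage _

def PRed (z : ℝ × ℝ) : ℝ × ℝ := z + PV (-⌊z.1⌋)

theorem PRed_mem {M : ℝ} {z : ℝ × ℝ} (hz : z ∈ PStrip M) :
    PRed z ∈ Icc (0:ℝ) 1 ×ˢ Icc (-M) M := by
  have h1 := Int.floor_le z.1
  have h2 := Int.lt_floor_add_one z.1
  have hz' : |z.2| ≤ M := hz
  have := abs_le.1 hz'
  simp only [PRed, PV, mem_prod, mem_Icc, Prod.fst_add, Prod.snd_add]
  push_cast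
  refine ⟨⟨by linarith, by linarith⟩, by linarith, by linarith⟩

theorem PRed_eq (z : ℝ × ℝ) : PRed z + PV ⌊z.1⌋ = z := by
  rw [PRed, add_assoc, ← PV_add]
  simp [PV_zero]

theorem strip_eps {g : (ℝ × ℝ) ≃ₜ (ℝ × ℝ)} (hg : ∀ z, g z ≠ z)
    (hT : ∀ z (k : ℤ), g (z + PV k) = g z + PV k) {M : ℝ} (hM : 0 < M) :
    ∃ ε, 0 < ε ∧ ∀ z ∈ PStrip M, ε ≤ dist (g z) z := by
  obtain ⟨w, -, hw⟩ := (isCompact_Icc.prod isCompact_Icc).exists_isMinOn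
    (s := Icc (0:ℝ) 1 ×ˢ Icc (-M) M) ⟨(0, 0), by simp; exact hM.le⟩
    (f := fun z => dist (g z) z) (by fun_prop)
  refine ⟨dist (g w) w, dist_pos.2 (hg w), fun z hz => ?_⟩
  have := hw (PRed_mem hz)
  simp only [mem_ofPred_eq] at this
  refine this.trans (le_of_eq ?_)
  conv_rhs => rw [← PRed_eq z, hT, dist_add_right]

def PLk (g : (ℝ × ℝ) → (ℝ × ℝ)) (S : Set (ℝ × ℝ)) (η : ℝ) (a b : ℝ × ℝ) : Prop :=
  ∃ n, 1 ≤ n ∧ ∃ y, y ∈ S ∧ g^[n] y ∈ S ∧ dist a y < η ∧ dist (g^[n] y) b < η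

theorem transGen_seq {α : Type*} {R : α → α → Prop} {a b : α} (h : Relation.TransGen R a b) :
    ∃ N, 1 ≤ N ∧ ∃ x : ℕ → α, x 0 = a ∧ x N = b ∧ ∀ i < N, R (x i) (x (i + 1)) := by
  induction h with
  | single h =>
    rename_i b
    exact ⟨1, le_rfl, fun k => if k = 0 then a else b, by simp, by simp, by
      intro i hi
      have : i = 0 := by omega
      subst this; simpa using h⟩
  | tail _ h ih =>
    rename_i b c _
    obtain ⟨N, hN, x, h0, h1, h2⟩ := ih
    refine ⟨N + 1, by omega, fun k => if k ≤ N then x k else c, by simp [h0], by simp, ?_⟩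
    intro i hi
    by_cases hc : i + 1 ≤ N
    · have : i ≤ N := by omega
      simp only [hc, this, if_true]
      exact h2 i (by omega)
    · have : i = N := by omega
      subst this
      simpa [h1] using h

theorem PLk_irrefl {g : (ℝ × ℝ) ≃ₜ (ℝ × ℝ)} (hg : PCls g) {S : Set (ℝ × ℝ)} (hS : Convex ℝ S)
    {η : ℝ} (hε : ∀ z ∈ S, 2 * η ≤ dist (g z) z) (a : ℝ × ℝ) :
    ¬ Relation.TransGen (PLk g S η) a a := by
  intro h
  set St : ℝ × ℝ → ℝ × ℝ → Prop := fun u v => PJ S (2 * η) (g u) v with hSt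
  have hit : ∀ n y, Relation.ReflTransGen St y ((⇑g)^[n] y) := by
    intro n y
    induction n with
    | zero => exact Relation.ReflTransGen.refl
    | succ n ih => exact ih.tail (by rw [Function.iterate_succ_apply']; exact Or.inl rfl)
  have key : ∀ a b, Relation.TransGen (PLk g S η) a b → ∃ y ∈ S, dist a y < η ∧
      ∃ u, Relation.ReflTransGen St y u ∧ g u ∈ S ∧ dist (g u) b < η := by
    have base : ∀ a b, PLk g S η a b → ∃ y ∈ S, dist a y < η ∧
        ∃ u, Relation.ReflTransGen St y u ∧ g u ∈ S ∧ dist (g u) b < η := by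
      rintro a b ⟨n, hn, y, h1, h2, h3, h4⟩
      obtain ⟨m, rfl⟩ : ∃ m, n = m + 1 := ⟨n - 1, by omega⟩
      rw [Function.iterate_succ_apply'] at h2 h4
      exact ⟨y, h1, h3, _, hit m y, h2, h4⟩
    intro a b h
    induction h with
    | single h => exact base _ _ h
    | tail _ h ih =>
      rename_i bb cc _
      obtain ⟨y, h1, h2, u, h3, h4, h5⟩ := ih
      obtain ⟨y', k1, k2, u', k3, k4, k5⟩ := base _ _ h
      refine ⟨y, h1, h2, u', (h3.tail ?_).trans k3, k4, k5⟩
      exact Or.inr ⟨h4, k1, by linarith [dist_triangle (g u) bb y']⟩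
  obtain ⟨y, h1, h2, u, h3, h4, h5⟩ := key a a h
  have hc : Relation.TransGen St y y := Relation.TransGen.tail' h3
    (Or.inr ⟨h4, h1, by linarith [dist_triangle (g u) a y]⟩)
  obtain ⟨N, hN, x, x0, x1, x2⟩ := transGen_seq hc
  exact no_chain hg hS hε ⟨N, hN, x, x1.trans x0.symm, x2⟩

theorem iter_V {g : (ℝ × ℝ) → (ℝ × ℝ)} (hT : ∀ z (k : ℤ), g (z + PV k) = g z + PV k) (n : ℕ)
    (z : ℝ × ℝ) (k : ℤ) : g^[n] (z + PV k) = g^[n] z + PV k := by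
  induction n with
  | zero => rfl
  | succ n ih => rw [Function.iterate_succ_apply', ih, hT, Function.iterate_succ_apply']

theorem PLk_shift {g : (ℝ × ℝ) → (ℝ × ℝ)} (hT : ∀ z (k : ℤ), g (z + PV k) = g z + PV k) {M η : ℝ}
    {a b : ℝ × ℝ} (k : ℤ) (h : Relation.TransGen (PLk g (PStrip M) η) a b) :
    Relation.TransGen (PLk g (PStrip M) η) (a + PV k) (b + PV k) := by
  refine Relation.TransGen.lift (fun z => z + PV k) ?_ _ _ h
  rintro a b ⟨n, hn, y, h1, h2, h3, h4⟩
  refine ⟨n, hn, y + PV k, PStrip_V.2 h1, ?_, ?_, ?_⟩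
  · rw [iter_V hT]; exact PStrip_V.2 h2
  · rwa [dist_add_right]
  · rwa [iter_V hT, dist_add_right]

theorem PLk_conn {g : (ℝ × ℝ) → (ℝ × ℝ)} (hT : ∀ z (k : ℤ), g (z + PV k) = g z + PV k)
    (hrec : ∀ V : Set (ℝ × ℝ), IsOpen V → V.Nonempty → ∃ y ∈ V, ∃ n, 1 ≤ n ∧ ∃ k : ℤ, ∃ y' ∈ V,
      g^[n] y = y' + PV k) {M η : ℝ} (hM : 0 < M) (hη : 0 < η) {w z : ℝ × ℝ} (hw : w ∈ PStrip M)
    (hz : z ∈ PStrip M) : ∃ j : ℤ, Relation.TransGen (PLk g (PStrip M) η) w (z + PV j) := by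
  refine (PStrip_convex M).isPreconnected.induction₂'
    (fun w z => ∃ j : ℤ, Relation.TransGen (PLk g (PStrip M) η) w (z + PV j)) ?_ ?_ hw hz
  · intro a ha
    have hne : (Metric.ball a (η / 2) ∩ {z | |z.2| < M}).Nonempty := by
      have ht : Tendsto (fun t : ℝ => ((a.1, t * a.2) : ℝ × ℝ)) (𝓝[<] 1) (𝓝 a) := by
        have : Continuous (fun t : ℝ => ((a.1, t * a.2) : ℝ × ℝ)) := by fun_prop
        have h2 := this.tendsto 1
        simp only [one_mul, Prod.mk.eta] at h2
        exact h2.mono_left nhdsWithin_le_nhds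
      have e1 := ht.eventually (Metric.ball_mem_nhds a (half_pos hη))
      have e2 : ∀ᶠ t : ℝ in 𝓝[<] 1, 0 < t ∧ t < 1 := by
        filter_upwards [Ioo_mem_nhdsLT (zero_lt_one' ℝ)] with t ht using ht
      obtain ⟨t, h1, h2, h3⟩ := (Filter.Eventually.and e1 e2).exists
      refine ⟨_, h1, ?_⟩
      simp only [mem_ofPred_eq, abs_mul, abs_of_pos h2]
      have h4 : |a.2| ≤ M := ha
      nlinarith [abs_nonneg a.2]
    obtain ⟨y, hy, n, hn, k, y', hy', he⟩ := hrec _ (Metric.isOpen_ball.inter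
      (isOpen_lt (by fun_prop) continuous_const)) hne
    have key : ∀ b ∈ Metric.ball a (η / 2), ∀ c ∈ Metric.ball a (η / 2),
        PLk g (PStrip M) η b (c + PV k) := by
      intro b hb c hc
      have h1 := hy.1
      have h2 := hy'.1
      have h3 : |y.2| < M := hy.2
      have h4 : |y'.2| < M := hy'.2
      rw [Metric.mem_ball] at hb hc h1 h2
      refine ⟨n, hn, y, h3.le, ?_, ?_, ?_⟩
      · rw [he]; exact PStrip_V.2 h4.le
      · linarith [dist_triangle_right b y a]
      · rw [he, dist_add_right]
        linarith [dist_triangle_right y' c a]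
    filter_upwards [nhdsWithin_le_nhds (Metric.ball_mem_nhds a (half_pos hη))] with b hb
    have ha' := Metric.mem_ball_self (x := a) (half_pos hη)
    exact ⟨⟨k, .single (key _ ha' _ hb)⟩, ⟨k, .single (key _ hb _ ha')⟩⟩
  · rintro x y z - - - ⟨j, hj⟩ ⟨i, hi⟩
    refine ⟨i + j, hj.trans ?_⟩
    rw [PV_add, ← add_assoc]
    exact PLk_shift hT j hi

theorem PLk_drift {g : (ℝ × ℝ) → (ℝ × ℝ)} (hT : ∀ z (k : ℤ), g (z + PV k) = g z + PV k)
    (hrec : ∀ V : Set (ℝ × ℝ), IsOpen V → V.Nonempty → ∃ y ∈ V, ∃ n, 1 ≤ n ∧ ∃ k : ℤ, ∃ y' ∈ V,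
      g^[n] y = y' + PV k) {M η : ℝ} (hM : 0 < M) (hη : 0 < η) (σ : ℤ) (hσ : |σ| = 1)
    (hdr : ∀ B : ℝ, ∃ z n, 1 ≤ n ∧ z ∈ PStrip M ∧ g^[n] z ∈ PStrip M ∧
      B < σ * ((g^[n] z).1 - z.1)) :
    ∃ z ∈ PStrip M, ∃ p : ℤ, 0 < σ * p ∧ Relation.TransGen (PLk g (PStrip M) η) z (z + PV p) := by
  have hσ2 : |(σ : ℝ)| = 1 := by exact_mod_cast hσ
  choose z n hn h1 h2 h3 using fun k : ℕ => hdr k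
  obtain ⟨⟨a, b⟩, hab, φ, hφ, hlim⟩ := ((isCompact_Icc.prod isCompact_Icc).prod
    (isCompact_Icc.prod isCompact_Icc)).tendsto_subseq
    (x := fun k => (PRed (z k), PRed (g^[n k] (z k))))
    (s := (Icc (0:ℝ) 1 ×ˢ Icc (-M) M) ×ˢ (Icc (0:ℝ) 1 ×ˢ Icc (-M) M))
    (fun k => ⟨PRed_mem (h1 k), PRed_mem (h2 k)⟩)
  have ha : a ∈ PStrip M := abs_le.2 hab.1.2
  have hb : b ∈ PStrip M := abs_le.2 hab.2.2
  obtain ⟨j, hj⟩ := PLk_conn hT hrec hM hη hb ha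
  have e1 := ((continuous_fst.tendsto _).comp hlim).eventually (Metric.ball_mem_nhds a hη)
  have e2 := ((continuous_snd.tendsto _).comp hlim).eventually (Metric.ball_mem_nhds b hη)
  have e3 := hφ.tendsto_atTop.eventually (eventually_ge_atTop (⌈1 - (σ * j : ℝ)⌉₊))
  obtain ⟨k, ⟨c1, c2⟩, c3⟩ := ((Filter.Eventually.and e1 e2).and e3).exists
  simp only [Function.comp, Metric.mem_ball] at c1 c2
  set i := φ k
  have c4 := h3 i
  have c5 : 1 - (σ * j : ℝ) ≤ i := (Nat.le_ceil _).trans (by exact_mod_cast c3)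
  set m : ℤ := ⌊(g^[n i] (z i)).1⌋ - ⌊(z i).1⌋ with hm
  have hlk : PLk g (PStrip M) η a (b + PV m) := by
    have hE : g^[n i] (PRed (z i)) = PRed (g^[n i] (z i)) + PV m := by
      rw [PRed, PRed, iter_V hT, add_assoc, ← PV_add]
      congr 2
      rw [hm]; ring
    refine ⟨n i, hn i, PRed (z i), PStrip_V.2 (h1 i), ?_, ?_, ?_⟩
    · rw [hE]; exact PStrip_V.2 (PStrip_V.2 (h2 i))
    · rwa [dist_comm]
    · rwa [hE, dist_add_right]
  refine ⟨a, ha, j + m, ?_, ?_⟩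
  · have f1 := Int.floor_le (g^[n i] (z i)).1
    have f2 := Int.lt_floor_add_one (g^[n i] (z i)).1
    have f3 := Int.floor_le (z i).1
    have f4 := Int.lt_floor_add_one (z i).1
    have hm2 : (m : ℝ) = ⌊(g^[n i] (z i)).1⌋ - ⌊(z i).1⌋ := by rw [hm]; push_cast; ring
    have : (0 : ℝ) < σ * (j + m) := by
      rcases (abs_eq zero_le_one).1 hσ2 with h | h <;> rw [h] at c4 c5 ⊢ <;> linarith
    exact_mod_cast this
  · rw [PV_add, ← add_assoc]
    exact Relation.TransGen.trans (.single hlk) (PLk_shift hT m hj)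

theorem PLk_mul {g : (ℝ × ℝ) → (ℝ × ℝ)} (hT : ∀ z (k : ℤ), g (z + PV k) = g z + PV k) {M η : ℝ}
    {a : ℝ × ℝ} {p : ℤ} (h : Relation.TransGen (PLk g (PStrip M) η) a (a + PV p)) (c : ℕ)
    (hc : 1 ≤ c) : Relation.TransGen (PLk g (PStrip M) η) a (a + PV (c * p)) := by
  induction c, hc using Nat.le_induction with
  | base => simpa using h
  | succ c hc ih =>
    refine h.trans ?_
    have := PLk_shift hT p ih
    rw [add_assoc, ← PV_add] at this
    convert this using 3
    push_cast; ring

theorem drift_contra {g : (ℝ × ℝ) ≃ₜ (ℝ × ℝ)} (hg : PCls g)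
    (hT : ∀ z (k : ℤ), g (z + PV k) = g z + PV k)
    (hrec : ∀ V : Set (ℝ × ℝ), IsOpen V → V.Nonempty → ∃ y ∈ V, ∃ n, 1 ≤ n ∧ ∃ k : ℤ, ∃ y' ∈ V,
      (⇑g)^[n] y = y' + PV k) {M : ℝ} (hM : 0 < M)
    (hdr : ∀ σ : ℤ, |σ| = 1 → ∀ B : ℝ, ∃ z n, 1 ≤ n ∧ z ∈ PStrip M ∧ (⇑g)^[n] z ∈ PStrip M ∧
      B < σ * (((⇑g)^[n] z).1 - z.1)) : False := by
  obtain ⟨ε, hε, hε2⟩ := strip_eps hg.2 hT hM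
  have hη : 0 < ε / 2 := half_pos hε
  have hirr := PLk_irrefl hg (PStrip_convex M) (η := ε / 2)
    (fun z hz => by have := hε2 z hz; linarith)
  obtain ⟨a, ha, p, hp, hap⟩ := PLk_drift hT hrec hM hη 1 (by simp) (hdr 1 (by simp))
  obtain ⟨b, hb, q, hq, hbq⟩ := PLk_drift hT hrec hM hη (-1) (by simp) (hdr (-1) (by simp))
  obtain ⟨k, hk⟩ := PLk_conn hT hrec hM hη ha hb
  obtain ⟨l, hl⟩ := PLk_conn hT hrec hM hη hb ha
  rw [one_mul] at hp
  have hq' : q ≤ -1 := by omega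
  let B : ℕ := (k + l).natAbs + 1
  have h1 := PLk_mul hT hbq B (by omega)
  have h2 := (h1.trans (PLk_shift hT _ hl))
  have h3 := hk.trans (PLk_shift hT k h2)
  rw [add_assoc, add_assoc, ← PV_add, ← PV_add] at h3
  set e := l + (B * q + k) with he
  have hneg : e < 0 := by
    have : (B : ℤ) * q ≤ -B := by nlinarith [Int.natCast_nonneg B]
    have : (B : ℤ) = |k + l| + 1 := by simp [B]
    have := le_abs_self (k + l)
    omega
  have h4 := PLk_mul hT h3 p.toNat (by omega)
  have h5 := PLk_mul hT hap (-e).toNat (by omega)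
  have h6 := h4.trans (PLk_shift hT _ h5)
  rw [add_assoc, ← PV_add] at h6
  have : ((-e).toNat : ℤ) * p + (p.toNat : ℤ) * e = 0 := by
    rw [Int.toNat_of_nonneg (by omega), Int.toNat_of_nonneg (by omega)]; ring
  rw [this, PV_zero, add_zero] at h6
  exact hirr a h6

theorem T1_coe_eq {a b : ℝ} : ((a : T1) = (b : T1)) ↔ ∃ k : ℤ, a = b + k := by
  rw [← sub_eq_zero, ← AddCircle.coe_sub, AddCircle.coe_eq_zero_iff]
  constructor
  · rintro ⟨k, hk⟩
    exact ⟨k, by simp at hk; linarith⟩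
  · rintro ⟨k, hk⟩
    exact ⟨k, by simp; linarith⟩

theorem pA_eq {z w : ℝ × ℝ} : pA z = pA w ↔ ∃ k : ℤ, z = w + PV k := by
  simp only [pA, Prod.mk.injEq, T1_coe_eq, PV]
  constructor
  · rintro ⟨⟨k, hk⟩, h⟩
    exact ⟨k, Prod.ext (by simpa using hk) (by simpa using h)⟩
  · rintro ⟨k, rfl⟩
    exact ⟨⟨k, by simp⟩, by simp⟩

theorem pA_cont : Continuous pA := by
  unfold pA
  exact ((AddCircle.continuous_mk' 1).comp continuous_fst).prodMk continuous_snd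

theorem pA_open : IsOpenMap pA :=
  IsOpenMap.prodMap (f := ((↑) : ℝ → T1)) (AddCircle.isLocalHomeomorph_coe (1:ℝ)).isOpenMap
    IsOpenMap.id

theorem lift_iso {f : Ann ≃ₜ Ann} (hiso : IsotopicToId f) {fc : (ℝ × ℝ) ≃ₜ (ℝ × ℝ)}
    (hl : IsLift f fc) : PIso fc ∧ ∀ z (k : ℤ), fc (z + PV k) = fc z + PV k := by
  obtain ⟨H, hH, H0, H1, Hh⟩ := hiso
  have cov := AddCircle.isCoveringMap_coe (1 : ℝ)
  let H' : ℝ × Ann → Ann := fun p => H (projIcc (0:ℝ) 1 zero_le_one p.1, p.2)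
  have hH' : Continuous H' := hH.comp_continuous (by fun_prop) (fun p => ⟨Subtype.property _, trivial⟩)
  have H'0 : ∀ z, H' (0, z) = z := by intro z; simp [H', H0]
  have H'1 : ∀ z, H' (1, z) = f z := by intro z; simp [H', H1]
  have H'i : ∀ t, Function.Injective fun z => H' (t, z) := by
    intro t
    obtain ⟨g, hg⟩ := Hh (projIcc (0:ℝ) 1 zero_le_one t) (Subtype.property _)
    intro a b hab
    simp only [H', hg] at hab
    exact g.injective hab
  have pc := pA_cont
  let Φ : C(ℝ × (ℝ × ℝ), T1) := ⟨fun p => (H' (p.1, pA p.2)).1, by fun_prop⟩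
  obtain ⟨κ, ⟨hκ0, hκ⟩, -⟩ := cov.existsUnique_continuousMap_lifts Φ (0, (0, 0)) 0 (by
    simp [Φ, H'0, pA])
  have hk : ∀ p, ((κ p : ℝ) : T1) = (H' (p.1, pA p.2)).1 := fun p => congrFun hκ p
  have k0 : ∀ z, κ (0, z) = z.1 := by
    have := cov.eq_of_comp_eq (g₁ := fun z : ℝ × ℝ => κ (0, z)) (g₂ := fun z => z.1) (by fun_prop)
      (by fun_prop) (by funext z; simp [hk, H'0, pA]) (0, 0) hκ0
    exact fun z => congrFun this z
  have kV : ∀ (k : ℤ) t z, κ (t, z + PV k) = κ (t, z) + k := by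
    intro k
    have := cov.eq_of_comp_eq (g₁ := fun p : ℝ × (ℝ × ℝ) => κ (p.1, p.2 + PV k))
      (g₂ := fun p => κ p + k) (by fun_prop) (by fun_prop) (by
        funext p
        have h1 : pA (p.2 + PV k) = pA p.2 := pA_eq.2 ⟨k, rfl⟩
        have h2 : ((κ p + k : ℝ) : T1) = (κ p : ℝ) := T1_coe_eq.2 ⟨k, rfl⟩
        simp only [Function.comp, hk, h1, h2]) (0, (0, 0)) (by simp [k0, PV])
    exact fun t z => congrFun this (t, z)
  obtain ⟨c, hc⟩ : ∃ c : ℝ, ∀ z, (fc z).1 = κ (1, z) + c := by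
    have hh : ∀ z, (((fc z).1 : ℝ) : T1) = (κ (1, z) : ℝ) := by
      intro z
      rw [hk, H'1, ← hl z]
      rfl
    obtain ⟨c, hc⟩ := T1_coe_eq.1 (hh (0, 0))
    have := cov.eq_of_comp_eq (g₁ := fun z : ℝ × ℝ => (fc z).1)
      (g₂ := fun z => κ (1, z) + c) (by fun_prop) (by fun_prop) (by
        funext z
        have h2 : ((κ (1, z) + c : ℝ) : T1) = (κ (1, z) : ℝ) := T1_coe_eq.2 ⟨c, rfl⟩
        simp only [Function.comp, hh, h2]) (0, 0) hc
    exact ⟨c, fun z => congrFun this z⟩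
  have hy : ∀ z, (fc z).2 = (H' (1, pA z)).2 := by
    intro z
    rw [H'1, ← hl z]
    rfl
  refine ⟨⟨fun p => (κ p + p.1 * c, (H' (p.1, pA p.2)).2), by fun_prop, ?_, ?_, ?_⟩, ?_⟩
  · intro t z w h
    simp only [Prod.mk.injEq, add_left_inj] at h
    have h1 : H' (t, pA z) = H' (t, pA w) := by
      refine Prod.ext ?_ h.2
      have a1 := hk (t, z)
      have a2 := hk (t, w)
      simp only at a1 a2
      rw [← a1, ← a2, h.1]
    obtain ⟨k, rfl⟩ := pA_eq.1 (H'i t h1)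
    rw [kV] at h
    have : k = 0 := by simpa using h.1
    subst this
    simp [PV_zero]
  · intro z
    simp [k0, H'0, pA]
  · intro z
    refine Prod.ext ?_ ?_
    · simp [hc]
    · simp [hy]
  · intro z k
    have h1 : pA (z + PV k) = pA z := pA_eq.2 ⟨k, rfl⟩
    refine Prod.ext ?_ ?_
    · rw [hc, kV, Prod.fst_add, hc]; simp only [PV]; ring
    · rw [hy, h1, Prod.snd_add, hy]; simp [PV]

theorem iter_homeo {fc : (ℝ × ℝ) ≃ₜ (ℝ × ℝ)} (h : PIso fc) (n : ℕ) :
    ∃ g : (ℝ × ℝ) ≃ₜ (ℝ × ℝ), PIso g ∧ ∀ z, g z = (⇑fc)^[n] z := by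
  induction n with
  | zero => exact ⟨Homeomorph.refl _, PIso.refl, fun _ => rfl⟩
  | succ n ih =>
    obtain ⟨g, h1, h2⟩ := ih
    exact ⟨g.trans fc, h1.trans h, fun z => by simp [h2, Function.iterate_succ_apply']⟩

theorem PIso_V (k : ℤ) : PIso (Homeomorph.addRight (PV k)) := by
  refine ⟨fun p => p.2 + p.1 • PV k, by fun_prop, ?_, ?_, ?_⟩
  · intro t a b h
    simpa using h
  · intro z; simp
  · intro z; simp

theorem lift_rec {f : Ann ≃ₜ Ann} {μ : Measure Ann} (hμ : InvariantFullMeasure f μ)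
    {fc : (ℝ × ℝ) ≃ₜ (ℝ × ℝ)} (hl : IsLift f fc) (s : ℕ) (r : ℤ) {g : ℝ × ℝ → ℝ × ℝ}
    (hg : ∀ z, g z = (⇑fc)^[s] z + PV r) (V : Set (ℝ × ℝ)) (hV : IsOpen V) (hne : V.Nonempty) :
    ∃ y ∈ V, ∃ n, 1 ≤ n ∧ ∃ k : ℤ, ∃ y' ∈ V, g^[n] y = y' + PV k := by
  obtain ⟨h1, h2, h3⟩ := hμ
  have mp : MeasurePreserving f μ μ := ⟨f.continuous.measurable, h2⟩
  have ho := pA_open V hV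
  obtain ⟨x, ⟨y, hy, rfl⟩, m, hm, ⟨y', hy', he⟩⟩ := (mp.iterate s).conservative.exists_mem_iterate_mem
    ho.measurableSet.nullMeasurableSet (h3 _ ho (hne.image _)).ne'
  have hs : ∀ n z, pA ((⇑fc)^[n] z) = (⇑f)^[n] (pA z) := by
    intro n z
    induction n with
    | zero => rfl
    | succ n ih => rw [Function.iterate_succ_apply', Function.iterate_succ_apply', hl, ih]
  have hgs : ∀ n z, pA (g^[n] z) = ((⇑f)^[s])^[n] (pA z) := by
    intro n z
    induction n with
    | zero => rfl
    | succ n ih =>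
      rw [Function.iterate_succ_apply', Function.iterate_succ_apply' _ n, ← ih, hg, ← hs]
      exact pA_eq.2 ⟨r, rfl⟩
  obtain ⟨k, hk⟩ := pA_eq.1 ((hgs m y).trans he.symm)
  exact ⟨y, hy, m, by omega, k, y', hy', hk⟩

theorem rot_side {fc : (ℝ × ℝ) ≃ₜ (ℝ × ℝ)} {a : ℝ} (ha : (a : EReal) ∈ interior (rot fc)) (σ : ℤ)
    (hσ : |σ| = 1) : ∃ K : Set Ann, IsCompact K ∧ ∃ δ : ℝ, 0 < δ ∧
      ∃ (z : ℕ → ℝ × ℝ) (n : ℕ → ℕ), Tendsto n atTop atTop ∧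
      (∀ k, pA (z k) ∈ K ∧ pA ((⇑fc)^[n k] (z k)) ∈ K) ∧
      ∀ᶠ k in atTop, δ * n k ≤ σ * ((((⇑fc)^[n k] (z k)).1 - (z k).1) - n k * a) := by
  have gen : ∀ O : Set EReal, IsOpen O → (O ∩ interior (rot fc)).Nonempty →
      ∃ ρ ∈ O, ∃ K : Set Ann, IsCompact K ∧ ρ ∈ rotK fc K := by
    rintro O hO ⟨x, hx, hx2⟩
    have h3 : x ∈ closure (⋃ (K : Set Ann) (_ : IsCompact K), rotK fc K) := interior_subset hx2
    obtain ⟨ρ, h1, h2⟩ := mem_closure_iff.1 h3 O hO hx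
    simp only [mem_iUnion] at h2
    obtain ⟨K, hK, h⟩ := h2
    exact ⟨ρ, h1, K, hK, h⟩
  have hnh : ∀ᶠ t : ℝ in 𝓝 a, (t : EReal) ∈ interior (rot fc) :=
    continuous_coe_real_ereal.continuousAt.eventually (isOpen_interior.mem_nhds ha)
  rcases (abs_eq zero_le_one).1 hσ with rfl | rfl
  · obtain ⟨ρ, h1, K, hK, z, n, hn, h2, h3⟩ := gen (Ioi (a : EReal)) isOpen_Ioi (by
      obtain ⟨t, ht, ht2⟩ := ((hnh.filter_mono (nhdsWithin_le_nhds (s := Ioi a))).and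
        self_mem_nhdsWithin).exists
      exact ⟨t, EReal.coe_lt_coe_iff.2 ht2, ht⟩)
    obtain ⟨τ, t1, t2⟩ := EReal.lt_iff_exists_real_btwn.1 h1
    have t1' := EReal.coe_lt_coe_iff.1 t1
    refine ⟨K, hK, τ - a, by linarith, z, n, hn, h2, ?_⟩
    filter_upwards [h3.eventually (isOpen_Ioi.mem_nhds t2), hn.eventually (eventually_ge_atTop 1)]
      with k hk hk2
    have hk' := EReal.coe_lt_coe_iff.1 hk
    have hp : (0 : ℝ) < n k := by exact_mod_cast hk2
    rw [lt_div_iff₀ hp] at hk'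
    push_cast
    nlinarith
  · obtain ⟨ρ, h1, K, hK, z, n, hn, h2, h3⟩ := gen (Iio (a : EReal)) isOpen_Iio (by
      obtain ⟨t, ht, ht2⟩ := ((hnh.filter_mono (nhdsWithin_le_nhds (s := Iio a))).and
        self_mem_nhdsWithin).exists
      exact ⟨t, EReal.coe_lt_coe_iff.2 ht2, ht⟩)
    obtain ⟨τ, t1, t2⟩ := EReal.lt_iff_exists_real_btwn.1 h1
    have t2' := EReal.coe_lt_coe_iff.1 t2
    refine ⟨K, hK, a - τ, by linarith, z, n, hn, h2, ?_⟩
    filter_upwards [h3.eventually (isOpen_Iio.mem_nhds t1), hn.eventually (eventually_ge_atTop 1)]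
      with k hk hk2
    have hk' := EReal.coe_lt_coe_iff.1 hk
    have hp : (0 : ℝ) < n k := by exact_mod_cast hk2
    rw [div_lt_iff₀ hp] at hk'
    push_cast
    nlinarith

theorem PStrip_mono {M N : ℝ} {z : ℝ × ℝ} (h : z ∈ PStrip M) (hMN : M ≤ N) : z ∈ PStrip N := by
  have h' : |z.2| ≤ M := h
  exact h'.trans hMN

theorem K_strip {K : Set Ann} (hK : IsCompact K) : ∃ M : ℝ, ∀ z, pA z ∈ K → z ∈ PStrip M := by
  obtain ⟨M, hM⟩ := hK.exists_bound_of_continuousOn (f := fun p : Ann => p.2) (by fun_prop)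
  exact ⟨M, fun z hz => hM _ hz⟩

theorem disp_bound {h : ℝ × ℝ → ℝ × ℝ} (hc : Continuous h)
    (hT : ∀ z (k : ℤ), h (z + PV k) = h z + PV k) (M : ℝ) (s : ℕ) :
    ∃ C : ℝ, ∀ j < s, ∀ w ∈ PStrip M, h^[j] w ∈ PStrip C ∧ |(h^[j] w).1 - w.1| ≤ C := by
  induction s with
  | zero => exact ⟨0, by simp⟩
  | succ s ih =>
    obtain ⟨C, hC⟩ := ih
    have hcj := hc.iterate s
    obtain ⟨C1, hC1⟩ := (isCompact_Icc.prod isCompact_Icc).exists_bound_of_continuousOn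
      (s := Icc (0:ℝ) 1 ×ˢ Icc (-M) M) (f := fun w => (h^[s] w).2) (by fun_prop)
    obtain ⟨C2, hC2⟩ := (isCompact_Icc.prod isCompact_Icc).exists_bound_of_continuousOn
      (s := Icc (0:ℝ) 1 ×ˢ Icc (-M) M) (f := fun w => (h^[s] w).1 - w.1) (by fun_prop)
    refine ⟨max C (max C1 C2), fun j hj w hw => ?_⟩
    by_cases hjs : j < s
    · have := hC j hjs w hw
      exact ⟨PStrip_mono this.1 (le_max_left _ _), le_trans this.2 (le_max_left _ _)⟩
    · have : j = s := by omega
      subst this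
      have e1 := hC1 _ (PRed_mem hw)
      have e2 := hC2 _ (PRed_mem hw)
      have e3 : h^[j] w = h^[j] (PRed w) + PV ⌊w.1⌋ := by
        rw [← iter_V hT, PRed_eq]
      have e4 : w.1 = (PRed w).1 + ⌊w.1⌋ := by
        conv_lhs => rw [← PRed_eq w]
        rfl
      rw [Real.norm_eq_abs] at e1 e2
      constructor
      · rw [e3, PStrip_V]
        exact e1.trans ((le_max_left _ _).trans (le_max_right _ _))
      · have : (h^[j] w).1 - w.1 = (h^[j] (PRed w)).1 - (PRed w).1 := by
          rw [e3, Prod.fst_add, PV]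
          linarith
        rw [this]
        exact e2.trans ((le_max_right _ _).trans (le_max_right _ _))

theorem g_iter {h g : ℝ × ℝ → ℝ × ℝ} (hT : ∀ z (k : ℤ), h (z + PV k) = h z + PV k) (s : ℕ) (r : ℤ)
    (hg : ∀ z, g z = h^[s] z + PV (-r)) (m : ℕ) (z : ℝ × ℝ) :
    g^[m] z = h^[s * m] z + PV (-(m * r)) := by
  induction m with
  | zero => simp [PV_zero]
  | succ m ih =>
    rw [Function.iterate_succ_apply', ih, hg, iter_V hT, ← Function.iterate_add_apply, add_assoc,
      ← PV_add, show s + s * m = s * (m + 1) by ring,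
      show -((m : ℤ) * r) + -r = -(((m + 1 : ℕ) : ℤ) * r) by push_cast; ring]

theorem side_drift {fc : (ℝ × ℝ) ≃ₜ (ℝ × ℝ)} (hT : ∀ z (k : ℤ), fc (z + PV k) = fc z + PV k)
    (s : ℕ) (hs : 1 ≤ s) (r : ℤ) {g : ℝ × ℝ → ℝ × ℝ} (hg : ∀ z, g z = (⇑fc)^[s] z + PV (-r))
    (ha : (((r : ℝ) / (s : ℝ) : ℝ) : EReal) ∈ interior (rot fc)) (σ : ℤ) (hσ : |σ| = 1) :
    ∃ M : ℝ, ∀ B : ℝ, ∃ z n, 1 ≤ n ∧ z ∈ PStrip M ∧ g^[n] z ∈ PStrip M ∧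
      B < σ * ((g^[n] z).1 - z.1) := by
  obtain ⟨K, hK, δ, hδ, z, n, hn, hzK, hdr⟩ := rot_side ha σ hσ
  obtain ⟨M, hM⟩ := K_strip hK
  have hTs : ∀ z (k : ℤ), fc.symm (z + PV k) = fc.symm z + PV k := by
    intro z k
    apply fc.injective
    rw [hT]; simp
  obtain ⟨C, hC⟩ := disp_bound fc.symm.continuous hTs M s
  refine ⟨max M C, fun B => ?_⟩
  have ht : Tendsto (fun k => δ * (n k : ℝ)) atTop atTop :=
    (tendsto_natCast_atTop_atTop.comp hn).const_mul_atTop hδ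
  obtain ⟨k, ⟨h1, h2⟩, h3⟩ := ((hdr.and (ht.eventually (eventually_gt_atTop (B + C + |(r:ℝ)|)))).and
    (hn.eventually (eventually_ge_atTop s))).exists
  set N := n k
  set m := N / s with hm
  set j := N % s with hj
  have hNe : s * m + j = N := Nat.div_add_mod N s
  have hjs : j < s := Nat.mod_lt _ (by omega)
  have hm1 : 1 ≤ m := (Nat.one_le_div_iff (by omega)).2 h3
  set w := (⇑fc)^[N] (z k) with hw
  have hwe : (⇑fc)^[s * m] (z k) = (⇑fc.symm)^[j] w := by
    rw [hw, ← hNe, Nat.add_comm, Function.iterate_add_apply]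
    exact ((Function.LeftInverse.iterate (g := ⇑fc.symm) (f := ⇑fc) fc.symm_apply_apply j) _).symm
  obtain ⟨c1, c2⟩ := hC j hjs w (hM _ (hzK k).2)
  have hgm := g_iter hT s r hg m (z k)
  rw [hwe] at hgm
  refine ⟨z k, m, hm1, PStrip_mono (hM _ (hzK k).1) (le_max_left _ _), ?_, ?_⟩
  · rw [hgm, PStrip_V]
    exact PStrip_mono c1 (le_max_right _ _)
  · have hsp : (0 : ℝ) < s := by exact_mod_cast hs
    have e1 : ((g^[m] (z k)).1 - (z k).1) = (((⇑fc.symm)^[j] w).1 - w.1) +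
        ((w.1 - (z k).1) - N * (r / s)) + (j / s : ℝ) * r := by
      rw [hgm, Prod.fst_add, PV, ← hNe]
      push_cast
      field_simp
      ring
    have e2 : |(j / s : ℝ) * r| ≤ |(r : ℝ)| := by
      rw [abs_mul]
      have : |(j / s : ℝ)| ≤ 1 := by
        rw [abs_of_nonneg (by positivity), div_le_one hsp]
        exact_mod_cast hjs.le
      nlinarith [abs_nonneg (r : ℝ)]
    rw [e1]
    have c2' := abs_le.1 c2
    have e2' := abs_le.1 e2
    rcases (abs_eq zero_le_one).1 hσ with rfl | rfl <;> push_cast at h1 ⊢ <;> linarith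

theorem main_aux (f : Ann ≃ₜ Ann) (μ : Measure Ann)
    (hiso : IsotopicToId f) (hμ : InvariantFullMeasure f μ)
    (fc : (ℝ × ℝ) ≃ₜ (ℝ × ℝ)) (hlift : IsLift f fc) :
    ∀ r s : ℤ, 1 ≤ s → Int.gcd r s = 1 →
      (((r : ℝ) / (s : ℝ) : ℝ) : EReal) ∈ interior (rot fc) →
      ∃ z : ℝ × ℝ, (⇑fc)^[s.toNat] z = z + ((r : ℝ), 0) := by
  intro r s hs _ ha
  by_contra hno
  push Not at hno
  obtain ⟨n, rfl⟩ : ∃ n : ℕ, s = n := ⟨s.toNat, by omega⟩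
  rw [Int.toNat_natCast] at hno
  have hn : 1 ≤ n := by omega
  obtain ⟨hI, hT⟩ := lift_iso hiso hlift
  obtain ⟨h, hh, hhe⟩ := iter_homeo hI n
  let g := h.trans (Homeomorph.addRight (PV (-r)))
  have hg : ∀ z, g z = (⇑fc)^[n] z + PV (-r) := by
    intro z; simp [g, hhe]
  have hgc : PCls g := by
    refine ⟨hh.trans (PIso_V _), fun z hz => hno z ?_⟩
    rw [hg, PV_neg, ← sub_eq_add_neg, sub_eq_iff_eq_add] at hz
    exact hz
  have hgT : ∀ z (k : ℤ), g (z + PV k) = g z + PV k := by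
    intro z k
    rw [hg, hg, iter_V hT]; abel
  rw [Int.cast_natCast] at ha
  obtain ⟨M1, h1⟩ := side_drift hT n hn r hg ha 1 (by simp)
  obtain ⟨M2, h2⟩ := side_drift hT n hn r hg ha (-1) (by simp)
  refine drift_contra hgc hgT (lift_rec hμ hlift n (-r) hg) (M := max 1 (max M1 M2))
    (lt_of_lt_of_le one_pos (le_max_left _ _)) ?_
  intro σ hσ B
  rcases (abs_eq zero_le_one).1 hσ with rfl | rfl
  · obtain ⟨z, m, a1, a2, a3, a4⟩ := h1 B
    have hM : M1 ≤ max 1 (max M1 M2) := (le_max_left _ _).trans (le_max_right _ _)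
    exact ⟨z, m, a1, PStrip_mono a2 hM, PStrip_mono a3 hM, a4⟩
  · obtain ⟨z, m, a1, a2, a3, a4⟩ := h2 B
    have hM : M2 ≤ max 1 (max M1 M2) := (le_max_right _ _).trans (le_max_right _ _)
    exact ⟨z, m, a1, PStrip_mono a2 hM, PStrip_mono a3 hM, a4⟩

/-- **Theorem 2.7** (Franks, Le Calvez): rational numbers in the interior of the rotation
set are realized by periodic orbits. -/
theorem rational_in_interior_realized (f : Ann ≃ₜ Ann) (μ : Measure Ann)
    (hiso : IsotopicToId f) (hμ : InvariantFullMeasure f μ)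
    (fc : (ℝ × ℝ) ≃ₜ (ℝ × ℝ)) (hlift : IsLift f fc) :
    ∀ r s : ℤ, 1 ≤ s → Int.gcd r s = 1 →
      (((r : ℝ) / (s : ℝ) : ℝ) : EReal) ∈ interior (rot fc) →
      ∃ z : ℝ × ℝ, (⇑fc)^[s.toNat] z = z + ((r : ℝ), 0) := by
  exact main_aux f μ hiso hμ fc hlift
end
end
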